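/- Let A be a C*-algebra. The following statements are equivalent: (i) the Lebesgue decomposition of positive functionals over A is unique; (ii) every irreducible representation of A is finite dimensional (i.e. its Hilbert space is finite dimensional). -/

import Mathlib

open scoped ComplexOrder

section CStarDefs

variable {A : Type} [NonUnitalCStarAlgebra A]

/-- A linear functional on a C⋆-algebra is positive if `0 ≤ f (a⋆ * a)` for every `a`. -/
def IsPosFnC (f : A →ₗ[ℂ] ℂ) : Prop := ∀ a : A, 0 ≤ f (star a * a)

/-- Order on positive functionals: `f ≤ g` iff `g - f` is positive. -/
def FnLEC (f g : A →ₗ[ℂ] ℂ) : Prop := IsPosFnC (g - f)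

/-- Absolute continuity `f ≪ g` for positive functionals on a C⋆-algebra: `f` is the
pointwise limit of an increasing sequence of positive functionals `fₙ` with `fₙ ≤ αₙ • g`
for some positive reals `αₙ`. -/
def AbsContC (f g : A →ₗ[ℂ] ℂ) : Prop :=
  ∃ (fn : ℕ → (A →ₗ[ℂ] ℂ)) (α : ℕ → ℝ),
    (∀ n, IsPosFnC (fn n)) ∧
    (∀ n, 0 < α n) ∧
    (∀ n, FnLEC (fn n) (fn (n + 1))) ∧
    (∀ n, FnLEC (fn n) (((α n : ℂ)) • g)) ∧
    (∀ a : A, Filter.Tendsto (fun n => fn n a) Filter.atTop (nhds (f a)))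

/-- Singularity `f ⊥ g`: the only positive functional dominated by both `f` and `g`
is `0`. -/
def SingularC (f g : A →ₗ[ℂ] ℂ) : Prop :=
  ∀ p : A →ₗ[ℂ] ℂ, IsPosFnC p → FnLEC p f → FnLEC p g → p = 0

/-- `f = fr + fs` is a Lebesgue decomposition of `f` with respect to `g`. -/
def IsLebDecompC (f g fr fs : A →ₗ[ℂ] ℂ) : Prop :=
  IsPosFnC fr ∧ IsPosFnC fs ∧ f = fr + fs ∧ AbsContC fr g ∧ SingularC fs g

/-- The Lebesgue decomposition of `f` with respect to `g` is unique. -/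
def LebDecompUniqueForC (f g : A →ₗ[ℂ] ℂ) : Prop :=
  ∀ fr fs fr' fs' : A →ₗ[ℂ] ℂ, IsLebDecompC f g fr fs → IsLebDecompC f g fr' fs' →
    fr = fr' ∧ fs = fs'

end CStarDefs

/-- The Lebesgue decomposition of positive functionals over the C⋆-algebra `A` is unique. -/
def LebDecompUniqueC (A : Type) [NonUnitalCStarAlgebra A] : Prop :=
  ∀ f g : A →ₗ[ℂ] ℂ, IsPosFnC f → IsPosFnC g → LebDecompUniqueForC f g

/-- An irreducible representation of a C⋆-algebra: a nonzero `⋆`-representation whose only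
closed invariant subspaces are `{0}` and `H`. -/
def IsIrredRepC {A : Type} [NonUnitalCStarAlgebra A]
    {H : Type} [NormedAddCommGroup H] [InnerProductSpace ℂ H] [CompleteSpace H]
    (π : A →⋆ₙₐ[ℂ] (H →L[ℂ] H)) : Prop :=
  π ≠ 0 ∧
    ∀ S : Submodule ℂ H, IsClosed (S : Set H) →
      (∀ a : A, ∀ x ∈ S, π a x ∈ S) → S = ⊥ ∨ S = ⊤

/-!
Let `π` be irreducible on an infinite-dimensional space with orthonormal sequence `e j`, and put
`w j = 2⁻ʲ`, `y j = w j • e j`. The sums `f` and `g` of the vector functionals of the `y j` and of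
the `w j • y j` satisfy `f ≪ g`. For `η = ∑ w j • y j` and a suitable multiple `ψ` of the vector
functional of `η`, the difference `f - ψ` is still absolutely continuous with respect to `g`, while
Schur's lemma makes `ψ` singular to `g`. So `f = f + 0 = (f - ψ) + ψ` are two decompositions of `f`.

Conversely, in the GNS representation of `f + g`, functionals below `f + g` are given by positive
operators of the commutant; let `B` be that of `g`. Absolutely continuous functionals come from
operators vanishing on `ker B`, hence the difference of the operators `S`, `S'` of two singular
parts vanishes on `ker B`. If `ker S + ker B` and `ker S' + ker B` are dense, then `S = S'`.
Spectral theory gives this density for singular functionals once the commutant is a finite von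
Neumann algebra, in the sense that a bounded sequence tends strongly to `0` if its adjoints do.
When all irreducible representations are finite dimensional the commutant is finite: a maximal
family of partial-isometry-like elements in `A` yields `d ≠ 0` with `d A d` commutative, and then a
finite family controlling the commutant on the range of `d`; this applies to every nonzero central
compression.
-/

open scoped InnerProductSpace
open Filter Topology ContinuousLinearMap

section StrongConvergence
variable {E F : Type*} [NormedAddCommGroup E] [NormedSpace ℂ E]
  [NormedAddCommGroup F] [NormedSpace ℂ F]

theorem isClosed_setOf_tendsto_apply_zero {ι : Type*} {l : Filter ι} {T : ι → E →L[ℂ] F} {M : ℝ}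
    (hT : ∀ᶠ i in l, ‖T i‖ ≤ M) : IsClosed {x | Tendsto (fun i => T i x) l (𝓝 0)} := by
  refine isClosed_of_closure_subset fun x hx => Metric.tendsto_nhds.2 fun ε hε => ?_
  obtain ⟨y, hy, hxy⟩ := Metric.mem_closure_iff.1 hx (ε / (2 * (|M| + 1))) (by positivity)
  filter_upwards [hT, Metric.tendsto_nhds.1 hy (ε / 2) (half_pos hε)] with i hi hyi
  rw [dist_zero_right] at hyi ⊢
  calc ‖T i x‖ = ‖T i (x - y) + T i y‖ := by rw [← map_add, sub_add_cancel]
    _ ≤ (|M| + 1) * ‖x - y‖ + ‖T i y‖ := (norm_add_le _ _).trans <| by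
        gcongr; exact (T i).le_of_opNorm_le (by linarith [le_abs_self M]) _
    _ < (|M| + 1) * (ε / (2 * (|M| + 1))) + ε / 2 := by
        rw [← dist_eq_norm]; gcongr
    _ = ε := by field_simp; norm_num

end StrongConvergence

section Representation
variable {A H K : Type*} [NonUnitalCStarAlgebra A]
  [NormedAddCommGroup H] [InnerProductSpace ℂ H] [CompleteSpace H]
  [NormedAddCommGroup K] [InnerProductSpace ℂ K] [CompleteSpace K]

theorem rep_mul_apply (π : A →⋆ₙₐ[ℂ] (H →L[ℂ] H)) (a b : A) (x : H) :
    π (a * b) x = π a (π b x) := by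
  rw [map_mul]; rfl

theorem inner_rep_left (π : A →⋆ₙₐ[ℂ] (H →L[ℂ] H)) (a : A) (x y : H) :
    ⟪π a x, y⟫_ℂ = ⟪x, π (star a) y⟫_ℂ := by
  rw [map_star, star_eq_adjoint, adjoint_inner_right]

theorem norm_rep_apply_le (π : A →⋆ₙₐ[ℂ] (H →L[ℂ] H)) (a : A) (x : H) :
    ‖π a x‖ ≤ ‖a‖ * ‖x‖ :=
  (π a).le_of_opNorm_le (NonUnitalStarAlgHom.norm_apply_le π a) x

theorem continuous_rep (π : A →⋆ₙₐ[ℂ] (H →L[ℂ] H)) : Continuous π :=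
  AddMonoidHomClass.continuous_of_bound π 1 fun a => by
    simpa using NonUnitalStarAlgHom.norm_apply_le π a

/-- The orbit map `a ↦ π a x` of a vector `x` under a representation `π`. -/
noncomputable def orbitMap (π : A →⋆ₙₐ[ℂ] (H →L[ℂ] H)) (x : H) : A →ₗ[ℂ] H where
  toFun a := π a x
  map_add' a b := by simp
  map_smul' c a := by simp

/-- A vector `x` is cyclic for the representation `π` if its orbit is dense. -/
def IsCyclicVector (π : A →⋆ₙₐ[ℂ] (H →L[ℂ] H)) (x : H) : Prop :=
  DenseRange (orbitMap π x)

/-- The matrix coefficient `a ↦ ⟪x, π a y⟫` of a representation `π`. -/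
noncomputable def matrixCoeff (π : A →⋆ₙₐ[ℂ] (H →L[ℂ] H)) (x y : H) : A →ₗ[ℂ] ℂ :=
  (innerSL ℂ x).toLinearMap ∘ₗ orbitMap π y

theorem orbitMap_apply (π : A →⋆ₙₐ[ℂ] (H →L[ℂ] H)) (x : H) (a : A) : orbitMap π x a = π a x :=
  rfl

theorem matrixCoeff_apply (π : A →⋆ₙₐ[ℂ] (H →L[ℂ] H)) (x y : H) (a : A) :
    matrixCoeff π x y a = ⟪x, π a y⟫_ℂ := rfl

theorem matrixCoeff_star_mul (π : A →⋆ₙₐ[ℂ] (H →L[ℂ] H)) (x y : H) (a b : A) :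
    matrixCoeff π x y (star a * b) = ⟪π a x, π b y⟫_ℂ := by
  rw [matrixCoeff_apply, rep_mul_apply, inner_rep_left]

theorem matrixCoeff_self_star_mul (π : A →⋆ₙₐ[ℂ] (H →L[ℂ] H)) (x : H) (a : A) :
    matrixCoeff π x x (star a * a) = ((‖π a x‖ ^ 2 : ℝ) : ℂ) := by
  rw [matrixCoeff_star_mul, inner_self_eq_norm_sq_to_K, Complex.ofReal_pow]; rfl

theorem norm_matrixCoeff_le (π : A →⋆ₙₐ[ℂ] (H →L[ℂ] H)) (x : H) (a : A) :
    ‖matrixCoeff π x x a‖ ≤ ‖x‖ ^ 2 * ‖a‖ :=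
  calc _ ≤ ‖x‖ * ‖π a x‖ := norm_inner_le_norm _ _
    _ ≤ ‖x‖ * (‖a‖ * ‖x‖) := by gcongr; exact norm_rep_apply_le π a x
    _ = _ := by ring

/-- The commutant `π(A)'` of a representation `π`. -/
noncomputable def commutant (π : A →⋆ₙₐ[ℂ] (H →L[ℂ] H)) : StarSubalgebra ℂ (H →L[ℂ] H) :=
  StarSubalgebra.centralizer ℂ (Set.range π)

theorem mem_commutant {π : A →⋆ₙₐ[ℂ] (H →L[ℂ] H)} {T : H →L[ℂ] H} :
    T ∈ commutant π ↔ ∀ a x, T (π a x) = π a (T x) := by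
  simp only [commutant, StarSubalgebra.mem_centralizer_iff, Set.forall_mem_range, ← map_star,
    ContinuousLinearMap.ext_iff]
  exact ⟨fun h a x => ((h a).1 x).symm, fun h a => ⟨fun x => (h a x).symm, fun x => (h _ x).symm⟩⟩

theorem commute_of_mem_commutant {π : A →⋆ₙₐ[ℂ] (H →L[ℂ] H)} {T : H →L[ℂ] H}
    (hT : T ∈ commutant π) (a : A) : Commute T (π a) :=
  ContinuousLinearMap.ext (mem_commutant.1 hT a)

theorem cfc_mem_commutant {π : A →⋆ₙₐ[ℂ] (H →L[ℂ] H)} {T : H →L[ℂ] H} (hT : T ∈ commutant π)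
    (hT' : IsSelfAdjoint T) (f : ℝ → ℝ) : cfc f T ∈ commutant π :=
  mem_commutant.2 fun a x =>
    congr($(hT'.commute_cfc (commute_of_mem_commutant hT a) f) x)

theorem exists_intertwiner_of_norm_le {π : A →⋆ₙₐ[ℂ] (H →L[ℂ] H)} {ξ : H}
    (hξ : IsCyclicVector π ξ) (ρ : A →⋆ₙₐ[ℂ] (K →L[ℂ] K)) (η : K) (C : ℝ)
    (hC : ∀ a, ‖ρ a η‖ ≤ C * ‖π a ξ‖) :
    ∃ V : H →L[ℂ] K, (∀ a, V (π a ξ) = ρ a η) ∧ (∀ a x, V (π a x) = ρ a (V x)) ∧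
      ∀ x, ‖V x‖ ≤ C * ‖x‖ := by
  have hV : ∀ a, (orbitMap ρ η).extendOfNorm (orbitMap π ξ) (π a ξ) = ρ a η :=
    LinearMap.extendOfNorm_eq hξ ⟨C, hC⟩
  refine ⟨(orbitMap ρ η).extendOfNorm (orbitMap π ξ), hV, fun a x => ?_,
    LinearMap.norm_extendOfNorm_apply_le hξ C hC⟩
  refine hξ.induction_on x (isClosed_eq (by fun_prop) (by fun_prop)) fun b => ?_
  rw [orbitMap_apply, ← rep_mul_apply, hV, hV, rep_mul_apply]

theorem adjoint_intertwines {π : A →⋆ₙₐ[ℂ] (H →L[ℂ] H)} {ρ : A →⋆ₙₐ[ℂ] (K →L[ℂ] K)}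
    {V : H →L[ℂ] K} (h : ∀ a x, V (π a x) = ρ a (V x)) (a : A) (x : K) :
    adjoint V (ρ a x) = π a (adjoint V x) := by
  refine ext_inner_right ℂ fun y => ?_
  rw [adjoint_inner_left, inner_rep_left, inner_rep_left, adjoint_inner_left, h]

theorem IsCyclicVector.eq_zero_of_forall_rep_eq_zero {π : A →⋆ₙₐ[ℂ] (H →L[ℂ] H)} {ξ : H}
    (hξ : IsCyclicVector π ξ) {x : H} (hx : ∀ a, π a x = 0) : x = 0 := by
  refine hξ.eq_of_inner_right ℂ fun a => ?_
  rw [orbitMap_apply, inner_rep_left, hx, inner_zero_right, inner_zero_right]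

theorem IsCyclicVector.eq_of_inner_eq {π : A →⋆ₙₐ[ℂ] (H →L[ℂ] H)} {ξ : H}
    (hξ : IsCyclicVector π ξ) {S T : H →L[ℂ] H}
    (h : ∀ a b, ⟪S (π a ξ), π b ξ⟫_ℂ = ⟪T (π a ξ), π b ξ⟫_ℂ) : S = T :=
  coeFn_injective <| hξ.equalizer S.continuous T.continuous <| funext fun a =>
    hξ.eq_of_inner_left ℂ (h a)

theorem IsCyclicVector.nonneg_of_inner {π : A →⋆ₙₐ[ℂ] (H →L[ℂ] H)} {ξ : H}
    (hξ : IsCyclicVector π ξ) {T : H →L[ℂ] H} (h : ∀ a, 0 ≤ ⟪T (π a ξ), π a ξ⟫_ℂ) : 0 ≤ T :=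
  (nonneg_iff_isPositive T).2 <| (isPositive_iff T).2 ⟨by
    rw [LinearMap.isSymmetric_iff_inner_map_self_real]
    intro x
    refine hξ.induction_on x (isClosed_eq (by fun_prop) (by fun_prop)) fun a => ?_
    exact Complex.conj_eq_iff_im.2 (Complex.nonneg_iff.1 (h a)).2.symm, fun x =>
    hξ.induction_on x (isClosed_le (by fun_prop) (by fun_prop)) h⟩

end Representation

section PositiveFunctional
variable {A : Type} [NonUnitalCStarAlgebra A]

theorem isPosFnC_matrixCoeff_self {H : Type*} [NormedAddCommGroup H] [InnerProductSpace ℂ H]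
    [CompleteSpace H] (π : A →⋆ₙₐ[ℂ] (H →L[ℂ] H)) (x : H) : IsPosFnC (matrixCoeff π x x) :=
  fun a => by
    rw [matrixCoeff_self_star_mul]
    exact Complex.zero_le_real.2 (sq_nonneg _)

theorem fnLEC_iff {f g : A →ₗ[ℂ] ℂ} : FnLEC f g ↔ ∀ a, f (star a * a) ≤ g (star a * a) :=
  forall_congr' fun _ => sub_nonneg

theorem linearMap_ext_star_mul_self {E : Type*} [AddCommGroup E] [Module ℂ E] {f g : A →ₗ[ℂ] E}
    (h : ∀ a, f (star a * a) = g (star a * a)) : f = g := by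
  let _ := CStarAlgebra.spectralOrder A
  let _ := CStarAlgebra.spectralOrderedRing A
  ext a
  obtain ⟨x, hx, -, rfl⟩ := CStarAlgebra.exists_sum_four_nonneg a
  simp only [map_sum, map_smul]
  refine Finset.sum_congr rfl fun i _ => ?_
  obtain ⟨b, hb⟩ := CStarAlgebra.nonneg_iff_eq_star_mul_self.mp (hx i)
  rw [hb, h]

theorem IsPosFnC.exists_positiveLinearMap [PartialOrder A] [StarOrderedRing A] {f : A →ₗ[ℂ] ℂ}
    (hf : IsPosFnC f) : ∃ φ : A →ₚ[ℂ] ℂ, ∀ a, φ a = f a :=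
  ⟨PositiveLinearMap.mk₀ f fun a ha => by
    obtain ⟨b, rfl⟩ := CStarAlgebra.nonneg_iff_eq_star_mul_self.mp ha
    exact hf b, fun _ => rfl⟩

theorem exists_approximateUnit (A : Type*) [NonUnitalCStarAlgebra A] :
    ∃ l : Filter A, l.NeBot ∧ (∀ᶠ u in l, ‖u‖ ≤ 1) ∧ (∀ᶠ u in l, star u = u) ∧
      ∀ a, Tendsto (fun u => u * a) l (𝓝 a) := by
  let _ := CStarAlgebra.spectralOrder A
  let _ := CStarAlgebra.spectralOrderedRing A
  have h := CStarAlgebra.increasingApproximateUnit A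
  exact ⟨_, h.neBot, h.eventually_norm, h.eventually_star_eq, h.tendsto_mul_right⟩

theorem norm_apply_le_sqrt_mul_norm_toPreGNS [PartialOrder A] [StarOrderedRing A]
    (f : A →ₚ[ℂ] ℂ) {C : NNReal} (hC : ∀ a, ‖f a‖ ≤ C * ‖a‖) (a : A) :
    ‖f a‖ ≤ √C * ‖f.toPreGNS a‖ := by
  obtain ⟨l, _, hnorm, hstar, hmul⟩ := exists_approximateUnit A
  refine le_of_tendsto (((map_continuous f).tendsto a).comp (hmul a)).norm ?_
  filter_upwards [hnorm, hstar] with u hu hu'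
  have hpre : ‖f.toPreGNS u‖ ≤ √C := by
    rw [PositiveLinearMap.preGNS_norm_def, f.ofPreGNS_toPreGNS, hu']
    refine Real.sqrt_le_sqrt ((Complex.re_le_norm _).trans ((hC _).trans ?_))
    exact mul_le_of_le_one_right C.2 ((norm_mul_le _ _).trans (by nlinarith [norm_nonneg u]))
  calc ‖f (u * a)‖ = ‖⟪f.toPreGNS u, f.toPreGNS a⟫_ℂ‖ := by
        rw [PositiveLinearMap.preGNS_inner_def, f.ofPreGNS_toPreGNS, f.ofPreGNS_toPreGNS, hu']
    _ ≤ ‖f.toPreGNS u‖ * ‖f.toPreGNS a‖ := norm_inner_le_norm _ _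
    _ ≤ _ := by gcongr

theorem exists_inner_toPreGNS_eq [PartialOrder A] [StarOrderedRing A] (f : A →ₚ[ℂ] ℂ) :
    ∃ ξ : f.GNS, ∀ a, ⟪ξ, (f.toPreGNS a : f.GNS)⟫_ℂ = f a := by
  obtain ⟨C, hC⟩ := f.exists_norm_apply_le
  let φ : f.PreGNS →L[ℂ] ℂ := (f.toLinearMap ∘ₗ f.ofPreGNS.toLinearMap).mkContinuous (√C)
    fun x => norm_apply_le_sqrt_mul_norm_toPreGNS f hC (f.ofPreGNS x)
  refine ⟨(InnerProductSpace.toDual ℂ f.GNS).symm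
    (φ.extend (UniformSpace.Completion.toComplL (𝕜 := ℂ))), fun a => ?_⟩
  rw [InnerProductSpace.toDual_symm_apply]
  exact φ.extend_eq (e := UniformSpace.Completion.toComplL (𝕜 := ℂ) (E := f.PreGNS))
    UniformSpace.Completion.denseRange_coe (UniformSpace.Completion.isUniformInducing_coe _)
    (f.toPreGNS a)

theorem IsPosFnC.exists_isCyclicVector {f : A →ₗ[ℂ] ℂ} (hf : IsPosFnC f) :
    ∃ (H : Type) (_ : NormedAddCommGroup H) (_ : InnerProductSpace ℂ H) (_ : CompleteSpace H)
      (π : A →⋆ₙₐ[ℂ] (H →L[ℂ] H)) (ξ : H), IsCyclicVector π ξ ∧ f = matrixCoeff π ξ ξ := by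
  let _ := CStarAlgebra.spectralOrder A
  let _ := CStarAlgebra.spectralOrderedRing A
  obtain ⟨φ, hφ⟩ := hf.exists_positiveLinearMap
  obtain ⟨ξ, hξ⟩ := exists_inner_toPreGNS_eq φ
  have horbit : ∀ a, φ.gnsNonUnitalStarAlgHom a ξ = (φ.toPreGNS a : φ.GNS) := fun a =>
    UniformSpace.Completion.denseRange_coe.eq_of_inner_left ℂ fun b => by
      rw [inner_rep_left, PositiveLinearMap.gnsNonUnitalStarAlgHom_apply_coe,
        UniformSpace.Completion.inner_coe, PositiveLinearMap.preGNS_inner_def,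
        φ.ofPreGNS_toPreGNS]
      exact hξ (star a * φ.ofPreGNS b)
  have hcyc : IsCyclicVector φ.gnsNonUnitalStarAlgHom ξ := by
    have : ⇑(orbitMap φ.gnsNonUnitalStarAlgHom ξ) = (fun x : φ.PreGNS => (x : φ.GNS)) ∘
      φ.toPreGNS := funext horbit
    rw [IsCyclicVector, this]
    exact UniformSpace.Completion.denseRange_coe.comp φ.toPreGNS.surjective.denseRange
      (UniformSpace.Completion.continuous_coe _)
  refine ⟨φ.GNS, inferInstance, inferInstance, inferInstance, φ.gnsNonUnitalStarAlgHom, ξ, hcyc,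
    LinearMap.ext fun a => ?_⟩
  rw [matrixCoeff_apply, horbit, hξ, hφ]

variable {H : Type*} [NormedAddCommGroup H] [InnerProductSpace ℂ H] [CompleteSpace H]
  {π : A →⋆ₙₐ[ℂ] (H →L[ℂ] H)} {ξ : H}

theorem IsCyclicVector.tendsto_rep_apply (hξ : IsCyclicVector π ξ) {l : Filter A}
    (hnorm : ∀ᶠ u in l, ‖u‖ ≤ 1) (hmul : ∀ a, Tendsto (fun u => u * a) l (𝓝 a)) (x : H) :
    Tendsto (fun u => π u x) l (𝓝 x) := by
  have hclosed : IsClosed {x | Tendsto (fun u => (π u - 1) x) l (𝓝 0)} :=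
    isClosed_setOf_tendsto_apply_zero (M := 1 + 1) <| hnorm.mono fun u hu =>
      (norm_sub_le _ _).trans <| add_le_add
        ((NonUnitalStarAlgHom.norm_apply_le π u).trans hu) norm_id_le
  have hx : Tendsto (fun u => (π u - 1) x) l (𝓝 0) := hξ.induction_on x hclosed fun a => by
    have h := ((continuous_rep π).tendsto a).comp (hmul a)
    have h' := ((ContinuousLinearMap.apply ℂ H ξ).continuous.tendsto _).comp h
    simpa [Function.comp_def, orbitMap_apply, sub_eq_zero] using h'.sub_const (π a ξ)
  simpa using hx.add_const x

theorem IsCyclicVector.norm_sq_le (hξ : IsCyclicVector π ξ) {C : ℝ}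
    (hC : ∀ a, ‖matrixCoeff π ξ ξ a‖ ≤ C * ‖a‖) (hC₀ : 0 ≤ C) : ‖ξ‖ ^ 2 ≤ C := by
  obtain ⟨l, _, hnorm, -, hmul⟩ := exists_approximateUnit A
  have hlim : Tendsto (fun u => ‖matrixCoeff π ξ ξ u‖) l (𝓝 ‖⟪ξ, ξ⟫_ℂ‖) :=
    (tendsto_const_nhds.inner (hξ.tendsto_rep_apply hnorm hmul ξ)).norm
  rw [← inner_self_eq_norm_sq (𝕜 := ℂ)]
  refine (Complex.re_le_norm _).trans (le_of_tendsto hlim (hnorm.mono fun u hu => ?_))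
  exact (hC u).trans (mul_le_of_le_one_right hC₀ hu)

theorem matrixCoeff_commutant_star_mul {T : H →L[ℂ] H} (hT : T ∈ commutant π) (ξ : H)
    (a b : A) : matrixCoeff π (T ξ) ξ (star a * b) = ⟪T (π a ξ), π b ξ⟫_ℂ := by
  rw [matrixCoeff_star_mul, mem_commutant.1 hT]

theorem isPosFnC_matrixCoeff_iff (hξ : IsCyclicVector π ξ) {T : H →L[ℂ] H}
    (hT : T ∈ commutant π) : IsPosFnC (matrixCoeff π (T ξ) ξ) ↔ 0 ≤ T := by
  simp only [IsPosFnC, matrixCoeff_commutant_star_mul hT]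
  exact ⟨hξ.nonneg_of_inner, fun h a => ((nonneg_iff_isPositive T).1 h).inner_nonneg_left _⟩

theorem matrixCoeff_add_left (π : A →⋆ₙₐ[ℂ] (H →L[ℂ] H)) (x y z : H) :
    matrixCoeff π (x + y) z = matrixCoeff π x z + matrixCoeff π y z :=
  LinearMap.ext fun _ => inner_add_left _ _ _

theorem matrixCoeff_sub_left (π : A →⋆ₙₐ[ℂ] (H →L[ℂ] H)) (x y z : H) :
    matrixCoeff π (x - y) z = matrixCoeff π x z - matrixCoeff π y z :=
  LinearMap.ext fun _ => inner_sub_left _ _ _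

theorem fnLEC_matrixCoeff_iff (hξ : IsCyclicVector π ξ) {S T : H →L[ℂ] H}
    (hS : S ∈ commutant π) (hT : T ∈ commutant π) :
    FnLEC (matrixCoeff π (S ξ) ξ) (matrixCoeff π (T ξ) ξ) ↔ S ≤ T := by
  rw [FnLEC, ← matrixCoeff_sub_left, ← _root_.sub_apply,
    isPosFnC_matrixCoeff_iff hξ (sub_mem hT hS), sub_nonneg]

theorem commutant_eq_of_matrixCoeff_eq (hξ : IsCyclicVector π ξ) {S T : H →L[ℂ] H}
    (hS : S ∈ commutant π) (hT : T ∈ commutant π)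
    (h : matrixCoeff π (S ξ) ξ = matrixCoeff π (T ξ) ξ) : S = T :=
  hξ.eq_of_inner_eq fun a b => by
    rw [← matrixCoeff_commutant_star_mul hS, ← matrixCoeff_commutant_star_mul hT, h]

theorem exists_intertwiner_of_fnLEC {K : Type*} [NormedAddCommGroup K] [InnerProductSpace ℂ K]
    [CompleteSpace K] {ρ : A →⋆ₙₐ[ℂ] (K →L[ℂ] K)} (hξ : IsCyclicVector π ξ)
    (hρ : ∀ x, (∀ a, ρ a x = 0) → x = 0) {η : K} {c : ℝ}
    (hle : FnLEC (matrixCoeff ρ η η) ((c : ℂ) • matrixCoeff π ξ ξ)) :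
    ∃ V : H →L[ℂ] K, V ξ = η ∧ ∀ a x, V (π a x) = ρ a (V x) := by
  obtain ⟨V, hVξ, hV, -⟩ := exists_intertwiner_of_norm_le hξ ρ η (√c) fun a => by
    have h := fnLEC_iff.1 hle a
    rw [LinearMap.smul_apply, matrixCoeff_self_star_mul, matrixCoeff_self_star_mul, smul_eq_mul,
      ← Complex.ofReal_mul, Complex.real_le_real] at h
    simpa [Real.sqrt_mul' c (sq_nonneg ‖π a ξ‖)] using Real.le_sqrt_of_sq_le h
  exact ⟨V, sub_eq_zero.1 <| hρ _ fun a => by rw [map_sub, ← hV, hVξ, sub_self], hV⟩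

/- If `V` intertwines `π` with the GNS representation of `p`, then `V†V` is the density of `p`. -/
theorem exists_commutant_of_fnLEC (hξ : IsCyclicVector π ξ) {p : A →ₗ[ℂ] ℂ} (hp : IsPosFnC p)
    {c : ℝ} (hle : FnLEC p ((c : ℂ) • matrixCoeff π ξ ξ)) :
    ∃ T ∈ commutant π, 0 ≤ T ∧ p = matrixCoeff π (T ξ) ξ := by
  obtain ⟨K, _, _, _, ρ, η, hη, rfl⟩ := hp.exists_isCyclicVector
  obtain ⟨V, hVξ, hV⟩ := exists_intertwiner_of_fnLEC hξ
    (fun _ => hη.eq_zero_of_forall_rep_eq_zero) hle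
  refine ⟨adjoint V ∘L V, mem_commutant.2 fun a x => ?_,
    (nonneg_iff_isPositive _).2 (isPositive_adjoint_comp_self V), LinearMap.ext fun a => ?_⟩
  · rw [comp_apply, comp_apply, hV, adjoint_intertwines hV]
  · rw [matrixCoeff_apply, matrixCoeff_apply, comp_apply, adjoint_inner_left, hV, hVξ]

end PositiveFunctional

section InvariantSubspace

theorem commute_starProjection_of_invariant {H : Type*} [NormedAddCommGroup H]
    [InnerProductSpace ℂ H] [CompleteSpace H] {T : H →L[ℂ] H} {U : Submodule ℂ H}
    [U.HasOrthogonalProjection] (hT : ∀ x ∈ U, T x ∈ U) (hT' : ∀ x ∈ U, adjoint T x ∈ U) :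
    Commute U.starProjection T := by
  refine ContinuousLinearMap.ext fun x => ?_
  refine Submodule.eq_starProjection_of_mem_of_inner_eq_zero
    (hT _ (U.starProjection_apply_mem x)) fun y hy => ?_
  change ⟪T x - T (U.starProjection x), y⟫_ℂ = 0
  rw [← map_sub, ← adjoint_inner_right]
  exact U.starProjection_inner_eq_zero x _ (hT' y hy)

variable {A H : Type*} [NonUnitalCStarAlgebra A]
  [NormedAddCommGroup H] [InnerProductSpace ℂ H] [CompleteSpace H]

/-- `S` is a closed subspace invariant under the representation `π`. -/
structure IsClosedInvariant (π : A →⋆ₙₐ[ℂ] (H →L[ℂ] H)) (S : Submodule ℂ H) : Prop where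
  isClosed : IsClosed (S : Set H)
  rep_mem : ∀ a, ∀ x ∈ S, π a x ∈ S

variable {π : A →⋆ₙₐ[ℂ] (H →L[ℂ] H)} {S : Submodule ℂ H}

theorem IsClosedInvariant.hasOrthogonalProjection (hS : IsClosedInvariant π S) :
    S.HasOrthogonalProjection :=
  have := hS.isClosed.completeSpace_coe
  .ofCompleteSpace S

theorem IsClosedInvariant.starProjection_mem_commutant (hS : IsClosedInvariant π S)
    [S.HasOrthogonalProjection] : S.starProjection ∈ commutant π :=
  mem_commutant.2 fun a x => congr($(commute_starProjection_of_invariant (hS.rep_mem a)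
    fun y hy => by rw [← star_eq_adjoint, ← map_star]; exact hS.rep_mem _ y hy) x)

theorem IsClosedInvariant.orthogonal (hS : IsClosedInvariant π S) : IsClosedInvariant π Sᗮ where
  isClosed := S.isClosed_orthogonal
  rep_mem a x hx y hy := by
    rw [← star_star a, ← inner_rep_left]
    exact hx _ (hS.rep_mem _ y hy)

theorem IsClosedInvariant.inf (hS : IsClosedInvariant π S) {S' : Submodule ℂ H}
    (hS' : IsClosedInvariant π S') : IsClosedInvariant π (S ⊓ S') where
  isClosed := hS.isClosed.inter hS'.isClosed
  rep_mem a x hx := ⟨hS.rep_mem a x hx.1, hS'.rep_mem a x hx.2⟩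

theorem isClosedInvariant_ker {T : H →L[ℂ] H} (hT : T ∈ commutant π) :
    IsClosedInvariant π T.ker where
  isClosed := T.isClosed_ker
  rep_mem a x hx := by
    rw [LinearMap.mem_ker] at hx ⊢
    exact (mem_commutant.1 hT a x).trans (by rw [show T x = 0 from hx, map_zero])

theorem isClosedInvariant_closure_orbit (π : A →⋆ₙₐ[ℂ] (H →L[ℂ] H)) (x : H) :
    IsClosedInvariant π (orbitMap π x).range.topologicalClosure where
  isClosed := Submodule.isClosed_topologicalClosure _
  rep_mem a y hy := by
    refine map_mem_closure (π a).continuous hy ?_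
    rintro _ ⟨b, rfl⟩
    exact ⟨a * b, rep_mul_apply π a b x⟩

end InvariantSubspace

section Irreducible
variable {A H : Type} [NonUnitalCStarAlgebra A]
  [NormedAddCommGroup H] [InnerProductSpace ℂ H] [CompleteSpace H]
  {π : A →⋆ₙₐ[ℂ] (H →L[ℂ] H)}

theorem isIrredRepC_iff : IsIrredRepC π ↔ π ≠ 0 ∧
    ∀ S : Submodule ℂ H, IsClosedInvariant π S → S = ⊥ ∨ S = ⊤ :=
  and_congr_right fun _ => ⟨fun h S hS => h S hS.1 hS.2, fun h S hS hS' => h S ⟨hS, hS'⟩⟩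

theorem IsIrredRepC.eq_zero_of_forall_rep_eq_zero (hπ : IsIrredRepC π) {x : H}
    (hx : ∀ a, π a x = 0) : x = 0 := by
  have hker : ∀ y, y ∈ (⨅ a, (π a).ker) ↔ ∀ a, π a y = 0 := fun y => by
    simp [Submodule.mem_iInf]
  rcases (isIrredRepC_iff.1 hπ).2 (⨅ a, (π a).ker)
    ⟨by rw [Submodule.coe_iInf]; exact isClosed_iInter fun a => (π a).isClosed_ker,
      fun a y hy => (hker _).2 fun b => by rw [(hker y).1 hy a, map_zero]⟩ with h | h
  · exact (Submodule.mem_bot ℂ).1 (h ▸ (hker x).2 hx)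
  · refine (hπ.1 (NonUnitalStarAlgHom.ext fun a => ContinuousLinearMap.ext fun y => ?_)).elim
    exact (hker y).1 (h ▸ Submodule.mem_top) a

theorem IsIrredRepC.isCyclicVector (hπ : IsIrredRepC π) {x : H} (hx : x ≠ 0) :
    IsCyclicVector π x := by
  refine Submodule.dense_iff_topologicalClosure_eq_top.2 <|
    ((isIrredRepC_iff.1 hπ).2 _ (isClosedInvariant_closure_orbit π x)).resolve_left fun h => ?_
  refine hx (hπ.eq_zero_of_forall_rep_eq_zero fun a => ?_)
  rw [← Submodule.mem_bot ℂ, ← h]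
  exact Submodule.le_topologicalClosure _ ⟨a, rfl⟩

theorem IsIrredRepC.mul_eq_zero (hπ : IsIrredRepC π) {S T : H →L[ℂ] H} (hS : S ∈ commutant π)
    (hST : S * T = 0) : S = 0 ∨ T = 0 := by
  rcases (isIrredRepC_iff.1 hπ).2 _ (isClosedInvariant_ker hS) with h | h
  · exact .inr (ContinuousLinearMap.ext fun x => (LinearMap.ker_eq_bot'.1 h) (T x) congr($hST x))
  · exact .inl (ContinuousLinearMap.ext fun x => LinearMap.mem_ker.1 (h ▸ Submodule.mem_top))

theorem IsIrredRepC.le_or_le (hπ : IsIrredRepC π) {T : H →L[ℂ] H} (hT : T ∈ commutant π)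
    (hT' : IsSelfAdjoint T) (r : ℝ) : T ≤ algebraMap ℝ _ r ∨ algebraMap ℝ _ r ≤ T := by
  have hsa : IsSelfAdjoint (T - algebraMap ℝ _ r) := hT'.sub (.algebraMap _ (.all r))
  have hmem : (T - algebraMap ℝ _ r)⁺ ∈ commutant π := by
    rw [CFC.posPart_def, cfcₙ_eq_cfc]
    exact cfc_mem_commutant (sub_mem hT (algebraMap_mem _ (r : ℂ))) hsa _
  refine (hπ.mul_eq_zero hmem (CFC.posPart_mul_negPart _)).imp ?_ ?_
  · rw [CFC.posPart_eq_zero_iff _ hsa, sub_nonpos]; exact id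
  · rw [CFC.negPart_eq_zero_iff _ hsa, sub_nonneg]; exact id

theorem IsIrredRepC.eq_algebraMap_of_isSelfAdjoint (hπ : IsIrredRepC π) {T : H →L[ℂ] H}
    (hT : T ∈ commutant π) (hT' : IsSelfAdjoint T) : ∃ r : ℝ, T = algebraMap ℝ _ r := by
  have hsub : (spectrum ℝ T).Subsingleton := by
    by_contra h
    obtain ⟨s, hs, t, ht, hst⟩ := (Set.not_subsingleton_iff.1 h).exists_lt
    rcases hπ.le_or_le hT hT' ((s + t) / 2) with hle | hle
    · linarith [(le_algebraMap_iff_spectrum_le hT').1 hle t ht]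
    · linarith [(algebraMap_le_iff_le_spectrum hT').1 hle s hs]
  obtain ⟨r, hr⟩ : ∃ r, spectrum ℝ T ⊆ {r} := by
    rcases hsub.eq_empty_or_singleton with h | ⟨r, h⟩
    exacts [⟨0, h ▸ Set.empty_subset _⟩, ⟨r, h.subset⟩]
  exact ⟨r, CFC.eq_algebraMap_of_spectrum_subset_singleton T r hr hT'⟩

theorem IsIrredRepC.exists_eq_smul_one (hπ : IsIrredRepC π) {T : H →L[ℂ] H}
    (hT : T ∈ commutant π) : ∃ c : ℂ, T = c • 1 := by
  obtain ⟨r, hr⟩ := hπ.eq_algebraMap_of_isSelfAdjoint (T := realPart T) (by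
    rw [realPart_apply_coe, ← Complex.coe_smul]
    exact (commutant π).smul_mem (add_mem hT (star_mem hT)) _)
    (realPart T).2
  obtain ⟨s, hs⟩ := hπ.eq_algebraMap_of_isSelfAdjoint (T := imaginaryPart T) (by
    rw [imaginaryPart_apply_coe, ← Complex.coe_smul]
    exact (commutant π).smul_mem ((commutant π).smul_mem (sub_mem hT (star_mem hT)) _) _)
    (imaginaryPart T).2
  refine ⟨r + Complex.I * s, ?_⟩
  rw [← realPart_add_I_smul_imaginaryPart T, hr, hs, Algebra.algebraMap_eq_smul_one,
    Algebra.algebraMap_eq_smul_one, add_smul, mul_smul]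
  rfl

end Irreducible

section HilbertSpace
variable {H K : Type*} [NormedAddCommGroup H] [InnerProductSpace ℂ H]
  [NormedAddCommGroup K] [InnerProductSpace ℂ K]

theorem exists_orthonormal_seq [CompleteSpace H] (hH : ¬ FiniteDimensional ℂ H) :
    ∃ e : ℕ → H, Orthonormal ℂ e := by
  obtain ⟨w, b, -⟩ := exists_hilbertBasis ℂ H
  have hw : Infinite w := not_finite_iff_infinite.1 fun _ =>
    have := Fintype.ofFinite w
    hH b.toOrthonormalBasis.toBasis.finiteDimensional_of_finite
  exact ⟨b ∘ Infinite.natEmbedding w, b.orthonormal.comp _ (Infinite.natEmbedding w).injective⟩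

theorem norm_sq_sum_adjoint_apply_le [CompleteSpace H] [CompleteSpace K] {ι : Type*}
    {s : Finset ι} {J : ι → K →L[ℂ] H} (hJ : ∀ x, ∑ i ∈ s, ‖J i x‖ ^ 2 ≤ ‖x‖ ^ 2) (y : ι → H) :
    ‖∑ i ∈ s, adjoint (J i) (y i)‖ ^ 2 ≤ ∑ i ∈ s, ‖y i‖ ^ 2 := by
  set x := ∑ i ∈ s, adjoint (J i) (y i) with hx
  rcases (norm_nonneg x).eq_or_lt with h0 | h0
  · rw [← h0, sq, zero_mul]
    positivity
  have hle : ‖x‖ ^ 2 ≤ ∑ i ∈ s, ‖y i‖ * ‖J i x‖ := by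
    have hsq : ((‖x‖ ^ 2 : ℝ) : ℂ) = ∑ i ∈ s, ⟪y i, J i x⟫_ℂ := by
      simp only [← adjoint_inner_left, ← sum_inner]
      rw [← hx, inner_self_eq_norm_sq_to_K, Complex.ofReal_pow]; rfl
    rw [← Real.norm_of_nonneg (sq_nonneg ‖x‖), ← Complex.norm_real, hsq]
    exact norm_sum_le_of_le _ fun i _ => norm_inner_le_norm _ _
  refine le_of_mul_le_mul_right ?_ (pow_pos h0 2)
  calc ‖x‖ ^ 2 * ‖x‖ ^ 2 ≤ (∑ i ∈ s, ‖y i‖ * ‖J i x‖) ^ 2 := by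
        rw [← sq]; gcongr
    _ ≤ (∑ i ∈ s, ‖y i‖ ^ 2) * ∑ i ∈ s, ‖J i x‖ ^ 2 := Finset.sum_mul_sq_le_sq_mul_sq _ _ _
    _ ≤ (∑ i ∈ s, ‖y i‖ ^ 2) * ‖x‖ ^ 2 := by gcongr; exact hJ x

theorem sum_norm_sq_sub_monotone (y : ℕ → H) {w : ℕ → ℝ} (hw : ∀ j, w j ≠ 0) :
    Monotone fun k => ∑ j ∈ Finset.range (k + 1), ‖y j‖ ^ 2 -
      ‖∑ j ∈ Finset.range (k + 1), w j • y j‖ ^ 2 / ∑ j ∈ Finset.range (k + 1), w j ^ 2 := by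
  refine monotone_nat_of_le_succ fun k => ?_
  have hw2 (j : ℕ) : 0 < w j ^ 2 := by have := hw j; positivity
  have hs : 0 < ∑ j ∈ Finset.range (k + 1), w j ^ 2 :=
    Finset.sum_pos (fun j _ => hw2 j) Finset.nonempty_range_add_one
  rw [Finset.sum_range_succ _ (k + 1), Finset.sum_range_succ (fun j => w j • y j) (k + 1),
    Finset.sum_range_succ (fun j => w j ^ 2) (k + 1)]
  generalize ∑ j ∈ Finset.range (k + 1), w j • y j = x at *
  generalize ∑ j ∈ Finset.range (k + 1), w j ^ 2 = s at *
  have hEngel := Finset.sq_sum_div_le_sum_sq_div Finset.univ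
    ![‖x‖, |w (k + 1)| * ‖y (k + 1)‖] (g := ![s, w (k + 1) ^ 2])
    (by simp only [Fin.forall_fin_two, Finset.mem_univ, Matrix.cons_val_zero,
      Matrix.cons_val_one, hs, hw2, imp_self, and_self])
  simp only [Fin.sum_univ_two, Matrix.cons_val_zero, Matrix.cons_val_one, mul_pow, sq_abs,
    mul_div_cancel_left₀ _ (hw2 (k + 1)).ne'] at hEngel
  have hnorm : ‖x + w (k + 1) • y (k + 1)‖ ≤ ‖x‖ + |w (k + 1)| * ‖y (k + 1)‖ := by
    simpa only [norm_smul, Real.norm_eq_abs] using norm_add_le x (w (k + 1) • y (k + 1))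
  have hquot : ‖x + w (k + 1) • y (k + 1)‖ ^ 2 / (s + w (k + 1) ^ 2) ≤
      (‖x‖ + |w (k + 1)| * ‖y (k + 1)‖) ^ 2 / (s + w (k + 1) ^ 2) := by gcongr
  linarith

theorem sum_norm_sq_sub_nonneg (y : ℕ → H) {w : ℕ → ℝ} (hw : ∀ j, w j ≠ 0) (k : ℕ) :
    0 ≤ ∑ j ∈ Finset.range (k + 1), ‖y j‖ ^ 2 -
      ‖∑ j ∈ Finset.range (k + 1), w j • y j‖ ^ 2 / ∑ j ∈ Finset.range (k + 1), w j ^ 2 := by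
  refine le_of_eq_of_le ?_ (sum_norm_sq_sub_monotone y hw k.zero_le)
  simp [norm_smul, mul_pow, hw]

end HilbertSpace

section SumOfVectorFunctionals
variable {A H : Type} [NonUnitalCStarAlgebra A]
  [NormedAddCommGroup H] [InnerProductSpace ℂ H] [CompleteSpace H]
  {π : A →⋆ₙₐ[ℂ] (H →L[ℂ] H)}

theorem exists_hasSum_matrixCoeff (π : A →⋆ₙₐ[ℂ] (H →L[ℂ] H)) {z : ℕ → H}
    (hz : Summable fun j => ‖z j‖ ^ 2) :
    ∃ f : A →ₗ[ℂ] ℂ, ∀ a, HasSum (fun j => matrixCoeff π (z j) (z j) a) (f a) := by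
  have hsum (a : A) : Summable fun j => matrixCoeff π (z j) (z j) a :=
    .of_norm_bounded (hz.mul_right ‖a‖) fun j => norm_matrixCoeff_le π (z j) a
  refine ⟨⟨⟨fun a => ∑' j, matrixCoeff π (z j) (z j) a, fun a b => ?_⟩, fun c a => ?_⟩,
    fun a => (hsum a).hasSum⟩
  · simp only [map_add, (hsum a).tsum_add (hsum b)]
  · simp only [map_smul, smul_eq_mul, tsum_mul_left, RingHom.id_apply]

theorem isPosFnC_of_hasSum {z : ℕ → H} {f : A →ₗ[ℂ] ℂ}
    (hf : ∀ a, HasSum (fun j => matrixCoeff π (z j) (z j) a) (f a)) : IsPosFnC f :=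
  fun a => (hf (star a * a)).nonneg fun j => isPosFnC_matrixCoeff_self π (z j) a

theorem matrixCoeff_smul_left (π : A →⋆ₙₐ[ℂ] (H →L[ℂ] H)) (c : ℂ) (x y : H) :
    matrixCoeff π (c • x) y = star c • matrixCoeff π x y :=
  LinearMap.ext fun _ => inner_smul_left _ _ _

theorem matrixCoeff_smul_star_mul (π : A →⋆ₙₐ[ℂ] (H →L[ℂ] H)) (r : ℝ) (x : H) (a : A) :
    matrixCoeff π (r • x) (r • x) (star a * a) =
      ((r ^ 2 : ℝ) : ℂ) * matrixCoeff π x x (star a * a) := by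
  rw [matrixCoeff_self_star_mul, matrixCoeff_self_star_mul, ← Complex.coe_smul, map_smul,
    Complex.coe_smul, norm_smul, mul_pow, Real.norm_eq_abs, sq_abs, Complex.ofReal_mul]

variable {y : ℕ → H} {w : ℕ → ℝ} {f g : A →ₗ[ℂ] ℂ}

theorem sum_matrixCoeff_le (hw : ∀ j, w j ≠ 0)
    (hg : ∀ a, HasSum (fun j => matrixCoeff π (w j • y j) (w j • y j) a) (g a)) (s : Finset ℕ) :
    FnLEC (∑ j ∈ s, matrixCoeff π (y j) (y j)) (((∑ j ∈ s, (w j ^ 2)⁻¹ : ℝ) : ℂ) • g) := by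
  refine fnLEC_iff.2 fun a => ?_
  rw [LinearMap.sum_apply, LinearMap.smul_apply, Complex.ofReal_sum, Finset.sum_smul]
  refine Finset.sum_le_sum fun j _ => ?_
  have hj := le_hasSum (hg (star a * a)) j fun i _ => isPosFnC_matrixCoeff_self π _ a
  rw [matrixCoeff_smul_star_mul] at hj
  calc matrixCoeff π (y j) (y j) (star a * a)
      = (((w j ^ 2)⁻¹ : ℝ) : ℂ) *
          (((w j ^ 2 : ℝ) : ℂ) * matrixCoeff π (y j) (y j) (star a * a)) := by
        rw [← mul_assoc, ← Complex.ofReal_mul, inv_mul_cancel₀ (pow_ne_zero 2 (hw j)),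
          Complex.ofReal_one, one_mul]
    _ ≤ (((w j ^ 2)⁻¹ : ℝ) : ℂ) * g (star a * a) :=
        mul_le_mul_of_nonneg_left hj (Complex.zero_le_real.2 (by positivity))

theorem absContC_of_le_sum_matrixCoeff (hw : ∀ j, w j ≠ 0)
    (hg : ∀ a, HasSum (fun j => matrixCoeff π (w j • y j) (w j • y j) a) (g a))
    {F : ℕ → A →ₗ[ℂ] ℂ} (hpos : ∀ k, IsPosFnC (F k)) (hmono : ∀ k, FnLEC (F k) (F (k + 1)))
    (hle : ∀ k, FnLEC (F k) (∑ j ∈ Finset.range (k + 1), matrixCoeff π (y j) (y j)))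
    (hlim : ∀ a, Tendsto (fun k => F k a) atTop (𝓝 (f a))) : AbsContC f g := by
  refine ⟨F, fun k => ∑ j ∈ Finset.range (k + 1), (w j ^ 2)⁻¹, hpos, fun k => ?_, hmono,
    fun k => fnLEC_iff.2 fun a => (fnLEC_iff.1 (hle k) a).trans
      (fnLEC_iff.1 (sum_matrixCoeff_le hw hg _) a), hlim⟩
  exact Finset.sum_pos (fun j _ => by have := hw j; positivity) Finset.nonempty_range_add_one

theorem absContC_of_hasSum (hw : ∀ j, w j ≠ 0)
    (hf : ∀ a, HasSum (fun j => matrixCoeff π (y j) (y j) a) (f a))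
    (hg : ∀ a, HasSum (fun j => matrixCoeff π (w j • y j) (w j • y j) a) (g a)) :
    AbsContC f g := by
  refine absContC_of_le_sum_matrixCoeff hw hg
    (F := fun k => ∑ j ∈ Finset.range (k + 1), matrixCoeff π (y j) (y j))
    (fun k a => ?_) (fun k => ?_) (fun k => fnLEC_iff.2 fun a => le_rfl) fun a => ?_
  · rw [LinearMap.sum_apply]
    exact Finset.sum_nonneg fun j _ => isPosFnC_matrixCoeff_self π (y j) a
  · rw [FnLEC, Finset.sum_range_succ _ (k + 1), add_sub_cancel_left]
    exact isPosFnC_matrixCoeff_self π _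
  · simpa only [LinearMap.sum_apply, Function.comp_def] using
      (hf a).tendsto_sum_nat.comp (tendsto_add_atTop_nat 1)

/- The subtracted functionals are those of the projections in `ℓ²` onto the line of the truncated
weight sequence, and the Engel form of Cauchy–Schwarz makes the differences increase. -/
theorem absContC_sub_of_hasSum (hw : ∀ j, w j ≠ 0) {σ : ℝ} (hσ : HasSum (fun j => w j ^ 2) σ)
    {η : H} (hη : HasSum (fun j => w j • y j) η)
    (hf : ∀ a, HasSum (fun j => matrixCoeff π (y j) (y j) a) (f a))
    (hg : ∀ a, HasSum (fun j => matrixCoeff π (w j • y j) (w j • y j) a) (g a)) :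
    AbsContC (f - ((σ⁻¹ : ℝ) : ℂ) • matrixCoeff π η η) g := by
  let s (k : ℕ) : ℝ := ∑ j ∈ Finset.range (k + 1), w j ^ 2
  let U (k : ℕ) : H := ∑ j ∈ Finset.range (k + 1), w j • y j
  let F (k : ℕ) : A →ₗ[ℂ] ℂ := ∑ j ∈ Finset.range (k + 1), matrixCoeff π (y j) (y j) -
    (((s k)⁻¹ : ℝ) : ℂ) • matrixCoeff π (U k) (U k)
  have hw2 (j : ℕ) : 0 < w j ^ 2 := by have := hw j; positivity
  have hs (k : ℕ) : 0 < s k := Finset.sum_pos (fun j _ => hw2 j) Finset.nonempty_range_add_one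
  have hσ0 : σ ≠ 0 := ((hw2 0).trans_le (le_hasSum hσ 0 fun j _ => (hw2 j).le)).ne'
  have hF (k : ℕ) (a : A) : F k (star a * a) =
      ((∑ j ∈ Finset.range (k + 1), ‖π a (y j)‖ ^ 2 -
        ‖∑ j ∈ Finset.range (k + 1), w j • π a (y j)‖ ^ 2 / s k : ℝ) : ℂ) := by
    have hU : π a (U k) = ∑ j ∈ Finset.range (k + 1), w j • π a (y j) := by
      simp only [U, map_sum, ← Complex.coe_smul, map_smul]
    simp only [F, LinearMap.sub_apply, LinearMap.sum_apply, LinearMap.smul_apply,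
      matrixCoeff_self_star_mul, smul_eq_mul, hU]
    push_cast
    ring
  have hmono (k : ℕ) : FnLEC (F k) (F (k + 1)) := fnLEC_iff.2 fun a => by
    rw [hF, hF, Complex.real_le_real]
    exact sum_norm_sq_sub_monotone (fun j => π a (y j)) hw k.le_succ
  have hpos (k : ℕ) : IsPosFnC (F k) := fun a => by
    rw [hF, Complex.zero_le_real]
    exact sum_norm_sq_sub_nonneg (fun j => π a (y j)) hw k
  refine absContC_of_le_sum_matrixCoeff hw hg hpos hmono (fun k => ?_) fun a => ?_
  · rw [FnLEC, sub_sub_cancel]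
    intro a
    rw [LinearMap.smul_apply, smul_eq_mul, matrixCoeff_self_star_mul, ← Complex.ofReal_mul]
    exact Complex.zero_le_real.2 (mul_nonneg (inv_nonneg.2 (hs k).le) (sq_nonneg _))
  · have hUlim : Tendsto U atTop (𝓝 η) := hη.tendsto_sum_nat.comp (tendsto_add_atTop_nat 1)
    have hslim : Tendsto s atTop (𝓝 σ) := hσ.tendsto_sum_nat.comp (tendsto_add_atTop_nat 1)
    simp only [F, LinearMap.sub_apply, LinearMap.sum_apply, LinearMap.smul_apply]
    refine ((hf a).tendsto_sum_nat.comp (tendsto_add_atTop_nat 1)).sub <|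
      ((Complex.continuous_ofReal.tendsto _).comp (hslim.inv₀ hσ0)).smul ?_
    exact hUlim.inner (((π a).continuous.tendsto η).comp hUlim)

end SumOfVectorFunctionals

section UniqueImpliesFiniteDimensional
variable {A H K : Type} [NonUnitalCStarAlgebra A]
  [NormedAddCommGroup H] [InnerProductSpace ℂ H] [CompleteSpace H]
  [NormedAddCommGroup K] [InnerProductSpace ℂ K] [CompleteSpace K]
  {π : A →⋆ₙₐ[ℂ] (H →L[ℂ] H)} {ρ : A →⋆ₙₐ[ℂ] (K →L[ℂ] K)}

theorem IsIrredRepC.exists_apply_adjoint_eq_smul (hπ : IsIrredRepC π) {V W : K →L[ℂ] H}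
    (hV : ∀ a x, V (ρ a x) = π a (V x)) (hW : ∀ a x, W (ρ a x) = π a (W x)) :
    ∃ c : ℂ, ∀ y, W (adjoint V y) = c • y := by
  obtain ⟨c, hc⟩ := hπ.exists_eq_smul_one (T := W ∘L adjoint V) <| mem_commutant.2 fun a y => by
    rw [comp_apply, adjoint_intertwines hV, hW, comp_apply]
  exact ⟨c, fun y => congr($hc y)⟩

/-- `J` embeds the cyclic representation `(ρ, ξ)` in a direct sum of copies of `π`, sending `ξ` to
the family `z`; the embedding is recorded through its components. -/
structure IsSumEmbedding (ρ : A →⋆ₙₐ[ℂ] (K →L[ℂ] K)) (π : A →⋆ₙₐ[ℂ] (H →L[ℂ] H)) (ξ : K)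
    (z : ℕ → H) (J : ℕ → K →L[ℂ] H) : Prop where
  intertwines : ∀ i a x, J i (ρ a x) = π a (J i x)
  apply_cyclic : ∀ i, J i ξ = z i
  sum_norm_sq_le : ∀ (s : Finset ℕ) x, ∑ i ∈ s, ‖J i x‖ ^ 2 ≤ ‖x‖ ^ 2

theorem IsIrredRepC.exists_isSumEmbedding (hπ : IsIrredRepC π) {ξ : K} (hξ : IsCyclicVector ρ ξ)
    {z : ℕ → H}
    (hz : ∀ a, HasSum (fun j => matrixCoeff π (z j) (z j) a) (matrixCoeff ρ ξ ξ a)) :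
    ∃ J, IsSumEmbedding ρ π ξ z J := by
  have hJ (i : ℕ) := exists_intertwiner_of_fnLEC (η := z i) (c := 1) hξ
    (fun _ => hπ.eq_zero_of_forall_rep_eq_zero) <| fnLEC_iff.2 fun a => by
      rw [Complex.ofReal_one, one_smul]
      exact le_hasSum (hz _) i fun j _ => isPosFnC_matrixCoeff_self π (z j) a
  choose J hJξ hJ using hJ
  refine ⟨J, hJ, hJξ, fun s x =>
    hξ.induction_on x (isClosed_le (by fun_prop) (by fun_prop)) fun a => ?_⟩
  have h := sum_le_hasSum s (fun i _ => isPosFnC_matrixCoeff_self π (z i) a) (hz (star a * a))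
  simp only [matrixCoeff_self_star_mul, ← Complex.ofReal_sum, Complex.real_le_real] at h
  simpa only [orbitMap_apply, hJ, hJξ] using h

theorem IsSumEmbedding.tendsto_inner {ξ : K} {z : ℕ → H} {J : ℕ → K →L[ℂ] H}
    (hJ : IsSumEmbedding ρ π ξ z J) (hξ : IsCyclicVector ρ ξ)
    (hz : ∀ a, HasSum (fun j => matrixCoeff π (z j) (z j) a) (matrixCoeff ρ ξ ξ a)) (x : K) :
    Tendsto (fun n => ∑ i ∈ Finset.range n, ⟪z i, J i x⟫_ℂ) atTop (𝓝 ⟪ξ, x⟫_ℂ) := by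
  let ζ (n : ℕ) : K := ∑ i ∈ Finset.range n, adjoint (J i) (z i)
  have hζ (n : ℕ) : ‖ζ n‖ ≤ ‖ξ‖ := le_of_sq_le_sq
    ((norm_sq_sum_adjoint_apply_le (hJ.sum_norm_sq_le _) z).trans <| by
      simpa only [hJ.apply_cyclic] using hJ.sum_norm_sq_le _ ξ) (norm_nonneg ξ)
  have hinner (n : ℕ) (x : K) : ⟪ζ n, x⟫_ℂ = ∑ i ∈ Finset.range n, ⟪z i, J i x⟫_ℂ := by
    simp only [ζ, sum_inner, adjoint_inner_left]
  have hclosed : IsClosed {x | Tendsto (fun n => innerSL ℂ (ζ n - ξ) x) atTop (𝓝 0)} :=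
    isClosed_setOf_tendsto_apply_zero (M := ‖ξ‖ + ‖ξ‖) <| .of_forall fun n => by
      rw [innerSL_apply_norm]
      exact (norm_sub_le _ _).trans (by gcongr; exact hζ n)
  have hlim : Tendsto (fun n => innerSL ℂ (ζ n - ξ) x) atTop (𝓝 0) := by
    refine hξ.induction_on x hclosed fun a => ?_
    simp only [innerSL_apply_apply, inner_sub_left, orbitMap_apply, hinner,
      hJ.intertwines, hJ.apply_cyclic]
    exact tendsto_sub_nhds_zero_iff.2 (hz a).tendsto_sum_nat
  simpa only [innerSL_apply_apply, inner_sub_left, hinner,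
    tendsto_sub_nhds_zero_iff] using hlim

/- Otherwise `π a z ↦ π a η` is bounded on the orbit of `z` in the Hilbert sum of copies of `H`. By
Schur's lemma it acts on each coordinate as a scalar, which orthogonality forces to be `1`; but the
sum of coordinates is not bounded on the Hilbert sum. -/
theorem IsIrredRepC.not_fnLEC_smul_of_hasSum (hπ : IsIrredRepC π) {z : ℕ → H}
    (hz0 : ∀ i, z i ≠ 0) (horth : Pairwise fun i j => ⟪z i, z j⟫_ℂ = 0) {η : H}
    (hη : HasSum z η) {g : A →ₗ[ℂ] ℂ}
    (hg : ∀ a, HasSum (fun j => matrixCoeff π (z j) (z j) a) (g a)) (c : ℝ) :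
    ¬ FnLEC (matrixCoeff π η η) ((c : ℂ) • g) := by
  intro hle
  obtain ⟨K, _, _, _, ρ, ξ, hξ, rfl⟩ := (isPosFnC_of_hasSum hg).exists_isCyclicVector
  obtain ⟨J, hJ⟩ := hπ.exists_isSumEmbedding hξ hg
  obtain ⟨W, hWξ, hW⟩ := exists_intertwiner_of_fnLEC hξ
    (fun _ => hπ.eq_zero_of_forall_rep_eq_zero) hle
  choose w hw using fun i => hπ.exists_apply_adjoint_eq_smul (hJ.intertwines i) hW
  have hcoord (j : ℕ) : w j = 1 := by
    have hη' : ⟪η, z j⟫_ℂ = ⟪z j, z j⟫_ℂ := by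
      have h := (hη.mapL (innerSL ℂ (z j))).unique (hasSum_single j fun i hi => horth hi.symm)
      rw [← inner_conj_symm, show ⟪z j, η⟫_ℂ = _ from h]
      exact inner_conj_symm _ _
    have hw' : ⟪η, z j⟫_ℂ = ⟪w j • z j, z j⟫_ℂ := by
      have h := hJ.tendsto_inner hξ hg (adjoint W (z j))
      simp only [← adjoint_inner_left (J _), adjoint_inner_right, hWξ, hw] at h
      refine tendsto_nhds_unique h (tendsto_const_nhds.congr' ?_)
      filter_upwards [eventually_gt_atTop j] with n hn
      symm
      refine Finset.sum_eq_single_of_mem j (Finset.mem_range.2 hn) fun i _ hi => ?_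
      rw [inner_smul_left, horth hi, mul_zero]
    rw [hη', inner_smul_left, eq_comm, mul_eq_right₀ (inner_self_ne_zero.2 (hz0 j))] at hw'
    exact (map_eq_one_iff _ (starRingEnd ℂ).injective).1 hw'
  have hbound (n : ℕ) : (n * ‖z 0‖) ^ 2 ≤ ‖W‖ ^ 2 * (n * ‖z 0‖ ^ 2) := by
    have h := norm_sq_sum_adjoint_apply_le (hJ.sum_norm_sq_le (Finset.range n)) fun _ => z 0
    rw [Finset.sum_const, Finset.card_range, nsmul_eq_mul] at h
    have hsum : W (∑ i ∈ Finset.range n, adjoint (J i) (z 0)) = (n : ℂ) • z 0 := by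
      simp only [map_sum, hw, hcoord, one_smul, Finset.sum_const, Finset.card_range,
        Nat.cast_smul_eq_nsmul]
    calc (n * ‖z 0‖) ^ 2 = ‖W (∑ i ∈ Finset.range n, adjoint (J i) (z 0))‖ ^ 2 := by
          rw [hsum, norm_smul, Complex.norm_natCast]
      _ ≤ (‖W‖ * ‖∑ i ∈ Finset.range n, adjoint (J i) (z 0)‖) ^ 2 := by
          gcongr; exact W.le_opNorm _
      _ ≤ ‖W‖ ^ 2 * (n * ‖z 0‖ ^ 2) := by rw [mul_pow]; gcongr
  obtain ⟨n, hn⟩ := exists_nat_gt (‖W‖ ^ 2)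
  have hz : 0 < ‖z 0‖ := norm_pos_iff.2 (hz0 0)
  have hn0 : (0 : ℝ) < n := (sq_nonneg ‖W‖).trans_lt hn
  have hpos : 0 < n * ‖z 0‖ ^ 2 := by positivity
  nlinarith [hbound n]

theorem IsIrredRepC.singularC_smul (hπ : IsIrredRepC π) {η : H} {g : A →ₗ[ℂ] ℂ}
    (h : ∀ c : ℝ, ¬ FnLEC (matrixCoeff π η η) ((c : ℂ) • g)) (r : ℝ) :
    SingularC ((r : ℂ) • matrixCoeff π η η) g := by
  intro p hp hpη hpg
  have hη : η ≠ 0 := by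
    rintro rfl
    exact h 0 fun a => by simp [matrixCoeff_apply]
  obtain ⟨T, hT, -, rfl⟩ := exists_commutant_of_fnLEC (hπ.isCyclicVector hη) hp hpη
  obtain ⟨c, rfl⟩ := hπ.exists_eq_smul_one hT
  have hc : matrixCoeff π ((c • (1 : H →L[ℂ] H)) η) η = star c • matrixCoeff π η η :=
    matrixCoeff_smul_left π c η η
  rw [hc] at hp hpg ⊢
  obtain ⟨a, ha⟩ : ∃ a, π a η ≠ 0 := by
    by_contra! h0
    exact hη (hπ.eq_zero_of_forall_rep_eq_zero h0)
  have hc0 : 0 ≤ star c := by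
    have ha' : 0 < ((‖π a η‖ ^ 2 : ℝ) : ℂ) := Complex.zero_lt_real.2 (by positivity)
    have hca := hp a
    rw [LinearMap.smul_apply, matrixCoeff_self_star_mul, smul_eq_mul] at hca
    exact le_of_mul_le_mul_right (by rwa [zero_mul]) ha'
  obtain ⟨s, hs, hsc⟩ : ∃ s : ℝ, 0 ≤ s ∧ (s : ℂ) = star c :=
    RCLike.nonneg_iff_exists_ofReal.1 hc0
  rw [← hsc] at hpg ⊢
  rcases hs.eq_or_lt with rfl | hs
  · simp
  refine (h s⁻¹ (fnLEC_iff.2 fun b => ?_)).elim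
  have hs0 : (s : ℂ) ≠ 0 := Complex.ofReal_ne_zero.2 hs.ne'
  have hb := mul_le_mul_of_nonneg_left (fnLEC_iff.1 hpg b)
    (Complex.zero_le_real.2 (inv_nonneg.2 hs.le))
  simpa only [LinearMap.smul_apply, smul_eq_mul, Complex.ofReal_inv,
    inv_mul_cancel_left₀ hs0] using hb

theorem IsPosFnC.smul {f : A →ₗ[ℂ] ℂ} (hf : IsPosFnC f) {r : ℝ} (hr : 0 ≤ r) :
    IsPosFnC ((r : ℂ) • f) :=
  fun a => mul_nonneg (Complex.zero_le_real.2 hr) (hf a)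

theorem IsPosFnC.add {f g : A →ₗ[ℂ] ℂ} (hf : IsPosFnC f) (hg : IsPosFnC g) :
    IsPosFnC (f + g) :=
  fun a => add_nonneg (hf a) (hg a)

theorem AbsContC.isPosFnC {f g : A →ₗ[ℂ] ℂ} (h : AbsContC f g) : IsPosFnC f := by
  obtain ⟨F, -, hF, -, -, -, hlim⟩ := h
  exact fun a => ge_of_tendsto' (hlim _) fun n => hF n a

theorem singularC_zero_left (g : A →ₗ[ℂ] ℂ) : SingularC 0 g := fun _ hp hp0 _ =>
  linearMap_ext_star_mul_self fun a => le_antisymm (fnLEC_iff.1 hp0 a) (hp a)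

theorem finiteDimensional_of_lebDecompUniqueC (hA : LebDecompUniqueC A) (hπ : IsIrredRepC π) :
    FiniteDimensional ℂ H := by
  by_contra hH
  obtain ⟨e, he⟩ := exists_orthonormal_seq hH
  let w (j : ℕ) : ℝ := (1 / 2) ^ j
  let y (j : ℕ) : H := w j • e j
  have hw (j : ℕ) : w j ≠ 0 := by positivity
  have hy (j : ℕ) : ‖y j‖ = w j := by
    rw [norm_smul, he.1, mul_one, Real.norm_of_nonneg (by positivity)]
  have hwy (j : ℕ) : ‖w j • y j‖ = w j ^ 2 := by
    rw [norm_smul, hy, Real.norm_of_nonneg (by positivity), sq]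
  have hy0 (j : ℕ) : w j • y j ≠ 0 := smul_ne_zero (hw j) (smul_ne_zero (hw j) (he.ne_zero j))
  have horth : Pairwise fun i j => ⟪w i • y i, w j • y j⟫_ℂ = 0 := fun i j hij => by
    simp only [y, ← Complex.coe_smul, inner_smul_left, inner_smul_right, he.2 hij, mul_zero]
  have hpow {k : ℕ} (hk : k ≠ 0) : Summable fun j => w j ^ k := by
    simpa only [w, pow_right_comm] using summable_geometric_of_lt_one (r := (1 / 2 : ℝ) ^ k)
      (by positivity) (pow_lt_one₀ (by norm_num) (by norm_num) hk)
  obtain ⟨σ, hσ⟩ := hpow two_ne_zero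
  have hσ0 : 0 < σ :=
    (by positivity : 0 < w 0 ^ 2).trans_le (le_hasSum hσ 0 fun j _ => sq_nonneg (w j))
  obtain ⟨η, hη⟩ : Summable fun j => w j • y j := .of_norm (by simpa only [hwy] using hσ.summable)
  obtain ⟨f, hf⟩ := exists_hasSum_matrixCoeff π (z := y) (by simpa only [hy] using hσ.summable)
  obtain ⟨g, hg⟩ := exists_hasSum_matrixCoeff π (z := fun j => w j • y j)
    (by simpa only [hwy, ← pow_mul] using hpow four_ne_zero)
  have hndom := hπ.not_fnLEC_smul_of_hasSum hy0 horth hη hg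
  set ψ := ((σ⁻¹ : ℝ) : ℂ) • matrixCoeff π η η
  have hψg : SingularC ψ g := hπ.singularC_smul hndom σ⁻¹
  have hac : AbsContC (f - ψ) g := absContC_sub_of_hasSum hw hσ hη hf hg
  have hψ0 := (hA f g (isPosFnC_of_hasSum hf) (isPosFnC_of_hasSum hg) f 0 (f - ψ) ψ
    ⟨isPosFnC_of_hasSum hf, fun _ => le_rfl, (add_zero f).symm, absContC_of_hasSum hw hf hg,
      singularC_zero_left g⟩
    ⟨hac.isPosFnC, (isPosFnC_matrixCoeff_self π η).smul (inv_nonneg.2 hσ0.le),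
      (sub_add_cancel f ψ).symm, hac, hψg⟩).2
  have hη0 : matrixCoeff π η η = 0 := (smul_eq_zero.1 hψ0.symm).resolve_left <|
    Complex.ofReal_ne_zero.2 (inv_pos.2 hσ0).ne'
  exact hndom 0 fun a => by simp [hη0]

end UniqueImpliesFiniteDimensional

section QuasiState
variable {A : Type} [NonUnitalCStarAlgebra A]

variable (A) in
/-- The quasi-states of `A`, that is the contractive positive functionals, as a subset of the
locally convex space `A → ℂ` of all functions with pointwise convergence. -/
def quasiStates : Set (A → ℂ) :=
  {φ | ∃ f : A →ₗ[ℂ] ℂ, IsPosFnC f ∧ (∀ a, ‖f a‖ ≤ ‖a‖) ∧ ⇑f = φ}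

theorem isClosed_quasiStates : IsClosed (quasiStates A) := by
  have heq : quasiStates A = Set.range ((⇑) : (A →ₗ[ℂ] ℂ) → A → ℂ) ∩
      ((⋂ a, {φ | 0 ≤ φ (star a * a)}) ∩ ⋂ a, {φ | ‖φ a‖ ≤ ‖a‖}) := by
    ext φ
    simp only [quasiStates, Set.mem_ofPred_eq, Set.mem_inter_iff, Set.mem_range, Set.mem_iInter]
    constructor
    · rintro ⟨f, hf, hnorm, rfl⟩
      exact ⟨⟨f, rfl⟩, hf, hnorm⟩
    · rintro ⟨⟨f, rfl⟩, hf, hnorm⟩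
      exact ⟨f, hf, hnorm, rfl⟩
  rw [heq]
  exact (LinearMap.isClosed_range_coe A ℂ _).inter <|
    (isClosed_iInter fun a => isClosed_le continuous_const (continuous_apply _)).inter
      (isClosed_iInter fun a => isClosed_le (continuous_apply a).norm continuous_const)

theorem isCompact_quasiStates : IsCompact (quasiStates A) := by
  refine (isCompact_univ_pi fun a : A => isCompact_closedBall (0 : ℂ) ‖a‖).of_isClosed_subset
    isClosed_quasiStates ?_
  rintro _ ⟨f, -, hnorm, rfl⟩ a -
  exact mem_closedBall_zero_iff.2 (hnorm a)

theorem isExtreme_quasiStates_apply_eq_one {v : A} (hv : ‖v‖ ≤ 1) :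
    IsExtreme ℝ (quasiStates A) (quasiStates A ∩ {φ | φ v = 1}) := by
  have hball {φ : A → ℂ} (hφ : φ ∈ quasiStates A) : φ v ∈ Metric.closedBall (0 : ℂ) 1 := by
    obtain ⟨f, -, hnorm, rfl⟩ := hφ
    exact mem_closedBall_zero_iff.2 ((hnorm v).trans hv)
  refine ⟨Set.inter_subset_left, fun φ hφ ψ hψ χ hχ hseg => ⟨hφ, ?_⟩⟩
  have hone : (1 : ℂ) ∈ openSegment ℝ (φ v) (ψ v) := by
    rw [← show χ v = 1 from hχ.2]
    exact image_openSegment ℝ (LinearMap.proj (R := ℝ) v).toAffineMap φ ψ ▸ ⟨χ, hseg, rfl⟩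
  have hmem : (1 : ℂ) ∈ (Metric.closedBall (0 : ℂ) 1).extremePoints ℝ :=
    StrictConvexSpace.sphere_subset_extremePoints_closedBall _ one_ne_zero (by simp)
  exact (mem_extremePoints_iff_left.1 hmem).2 _ (hball hφ) _ (hball hψ) hone

variable {H : Type} [NormedAddCommGroup H] [InnerProductSpace ℂ H] [CompleteSpace H]
  {π : A →⋆ₙₐ[ℂ] (H →L[ℂ] H)}

theorem matrixCoeff_self_mem_quasiStates (π : A →⋆ₙₐ[ℂ] (H →L[ℂ] H)) {x : H} (hx : ‖x‖ ≤ 1) :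
    ⇑(matrixCoeff π x x) ∈ quasiStates A :=
  ⟨_, isPosFnC_matrixCoeff_self π x, fun a => (norm_matrixCoeff_le π x a).trans <|
    mul_le_of_le_one_left (norm_nonneg a) (pow_le_one₀ (norm_nonneg x) hx), rfl⟩

theorem IsClosedInvariant.matrixCoeff_starProjection {S : Submodule ℂ H}
    (hS : IsClosedInvariant π S) [S.HasOrthogonalProjection] (x : H) :
    matrixCoeff π (S.starProjection x) (S.starProjection x) =
      matrixCoeff π (S.starProjection x) x := by
  ext a
  rw [matrixCoeff_apply, matrixCoeff_apply, ← mem_commutant.1 hS.starProjection_mem_commutant,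
    ← Submodule.inner_starProjection_left_eq_right, Submodule.starProjection_eq_self_iff.2
      (S.starProjection_apply_mem x)]

theorem real_smul_matrixCoeff_inv_smul {r : ℝ} (hr : r ≠ 0) (x : H) :
    r ^ 2 • ⇑(matrixCoeff π (r⁻¹ • x) (r⁻¹ • x)) = ⇑(matrixCoeff π x x) := by
  ext a
  simp only [Pi.smul_apply, matrixCoeff_apply, ← Complex.coe_smul, map_smul, inner_smul_left,
    inner_smul_right, Complex.conj_ofReal, smul_eq_mul]
  rw [← mul_assoc, ← mul_assoc, ← Complex.ofReal_mul, ← Complex.ofReal_mul]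
  field_simp
  simp

theorem IsCyclicVector.eq_top_of_mem {ξ : H} (hξ : IsCyclicVector π ξ) {S : Submodule ℂ H}
    (hS : IsClosedInvariant π S) (h : ξ ∈ S) : S = ⊤ :=
  Submodule.eq_top_iff'.2 fun x =>
    hξ.induction_on x hS.isClosed fun a => by rw [orbitMap_apply]; exact hS.rep_mem a ξ h

theorem smul_matrixCoeff_eq_of_mem_extremePoints {x y z : H}
    (hext : ⇑(matrixCoeff π z z) ∈ (quasiStates A).extremePoints ℝ)
    (hsum : ⇑(matrixCoeff π x x) + ⇑(matrixCoeff π y y) = ⇑(matrixCoeff π z z))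
    (hnorm : ‖x‖ ^ 2 + ‖y‖ ^ 2 ≤ 1) (hx : x ≠ 0) (hy : y ≠ 0) :
    ‖x‖ ^ 2 • ⇑(matrixCoeff π z z) = ⇑(matrixCoeff π x x) := by
  have hpos : 0 < ‖x‖ := norm_pos_iff.2 hx
  have hys : ‖y‖ ≤ √(1 - ‖x‖ ^ 2) := Real.le_sqrt_of_sq_le (by linarith)
  have hspos : 0 < √(1 - ‖x‖ ^ 2) := (norm_pos_iff.2 hy).trans_le hys
  have hssq : √(1 - ‖x‖ ^ 2) ^ 2 = 1 - ‖x‖ ^ 2 := Real.sq_sqrt (Real.sqrt_pos.1 hspos).le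
  have hxz := (mem_extremePoints_iff_left.1 hext).2 _
    (matrixCoeff_self_mem_quasiStates π (x := ‖x‖⁻¹ • x) (by
      rw [norm_smul, norm_inv, norm_norm, inv_mul_cancel₀ hpos.ne'])) _
    (matrixCoeff_self_mem_quasiStates π (x := (√(1 - ‖x‖ ^ 2))⁻¹ • y) (by
      rwa [norm_smul, norm_inv, Real.norm_of_nonneg hspos.le, inv_mul_le_one₀ hspos]))
    ⟨‖x‖ ^ 2, √(1 - ‖x‖ ^ 2) ^ 2, by positivity, by positivity, by rw [hssq]; ring, by
      rw [real_smul_matrixCoeff_inv_smul hpos.ne', real_smul_matrixCoeff_inv_smul hspos.ne', hsum]⟩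
  rw [← hxz, real_smul_matrixCoeff_inv_smul hpos.ne']

theorem IsCyclicVector.isIrredRepC_of_mem_extremePoints {ξ : H} (hξ : IsCyclicVector π ξ)
    (hξ0 : ξ ≠ 0) (hext : ⇑(matrixCoeff π ξ ξ) ∈ (quasiStates A).extremePoints ℝ) :
    IsIrredRepC π := by
  refine isIrredRepC_iff.2 ⟨fun h0 => hξ0 <| hξ.eq_zero_of_forall_rep_eq_zero fun a => by
    rw [h0]; rfl, fun S hS => ?_⟩
  have := hS.hasOrthogonalProjection
  set P := S.starProjection
  set p := P ξ
  set q := Sᗮ.starProjection ξ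
  have hPmem : P ∈ commutant π := hS.starProjection_mem_commutant
  have hsum : ⇑(matrixCoeff π p p) + ⇑(matrixCoeff π q q) = ⇑(matrixCoeff π ξ ξ) := by
    rw [hS.matrixCoeff_starProjection, hS.orthogonal.matrixCoeff_starProjection]
    ext a
    simp only [Pi.add_apply, matrixCoeff_apply, ← inner_add_left]
    rw [Submodule.starProjection_add_starProjection_orthogonal]
  by_cases hp0 : p = 0
  · refine .inl ((Submodule.orthogonal_eq_top_iff _).1 <| hξ.eq_top_of_mem hS.orthogonal ?_)
    exact (Submodule.starProjection_apply_eq_zero_iff _).1 hp0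
  by_cases hq0 : q = 0
  · refine .inr (hξ.eq_top_of_mem hS ?_)
    rw [← S.orthogonal_orthogonal]
    exact (Submodule.starProjection_apply_eq_zero_iff _).1 hq0
  have hξ1 : ‖ξ‖ ^ 2 ≤ 1 := hξ.norm_sq_le (by
    obtain ⟨f, -, hnorm, hf⟩ := hext.1
    simpa only [one_mul, ← hf] using hnorm) zero_le_one
  have hpyth : ‖ξ‖ ^ 2 = ‖p‖ ^ 2 + ‖q‖ ^ 2 := Submodule.norm_sq_eq_add_norm_sq_starProjection ξ S
  have hφp := smul_matrixCoeff_eq_of_mem_extremePoints hext hsum (hpyth ▸ hξ1) hp0 hq0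
  have hPscalar : P = ((‖p‖ ^ 2 : ℝ) : ℂ) • 1 := by
    refine commutant_eq_of_matrixCoeff_eq hξ hPmem ((commutant π).smul_mem (one_mem _) _)
      (LinearMap.ext fun a => ?_)
    rw [← hS.matrixCoeff_starProjection, ← hφp]
    simp [matrixCoeff_smul_left]
  have hp1 : ‖p‖ ^ 2 = 1 := by
    have hPp : P p = p := Submodule.starProjection_eq_self_iff.2 (S.starProjection_apply_mem ξ)
    rw [hPscalar, smul_apply, one_apply_eq_self] at hPp
    exact_mod_cast smul_left_injective ℂ hp0 (hPp.trans (one_smul ℂ p).symm)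
  have hqpos : 0 < ‖q‖ := norm_pos_iff.2 hq0
  exact (by nlinarith : False).elim

theorem exists_isIrredRepC_of_forall_exists_quasiState {v : ℕ → A} (hv : ∀ j, ‖v j‖ ≤ 1)
    (h : ∀ k, ∃ φ ∈ quasiStates A, ∀ j ≤ k, φ (v j) = 1) :
    ∃ (H : Type) (_ : NormedAddCommGroup H) (_ : InnerProductSpace ℂ H) (_ : CompleteSpace H)
      (π : A →⋆ₙₐ[ℂ] (H →L[ℂ] H)), IsIrredRepC π ∧ ∀ j, π (v j) ≠ 0 := by
  let F (j : ℕ) : Set (A → ℂ) := quasiStates A ∩ {φ | φ (v j) = 1}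
  have hF (j : ℕ) : IsClosed (F j) :=
    isClosed_quasiStates.inter (isClosed_eq (continuous_apply _) continuous_const)
  have hcompact : IsCompact (⋂ j, F j) := isCompact_quasiStates.of_isClosed_subset
    (isClosed_iInter hF) fun φ hφ => (Set.mem_iInter.1 hφ 0).1
  have hne : (⋂ j, F j).Nonempty := by
    rw [← Set.inter_eq_right.2 (Set.iInter_subset_of_subset 0 Set.inter_subset_left :
      ⋂ j, F j ⊆ quasiStates A)]
    refine isCompact_quasiStates.inter_iInter_nonempty F hF fun u => ?_
    obtain ⟨φ, hφ, hφv⟩ := h (u.sup id)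
    exact ⟨φ, hφ, Set.mem_iInter₂.2 fun j hj => ⟨hφ, hφv j (Finset.le_sup (f := id) hj)⟩⟩
  obtain ⟨φ, hφ⟩ := hcompact.extremePoints_nonempty hne
  have hφv (j : ℕ) : φ (v j) = 1 := (Set.mem_iInter.1 hφ.1 j).2
  have hext : φ ∈ (quasiStates A).extremePoints ℝ :=
    (isExtreme_iInter fun j => isExtreme_quasiStates_apply_eq_one (hv j))
      |>.extremePoints_subset_extremePoints hφ
  obtain ⟨f, hf, -, rfl⟩ := hext.1
  obtain ⟨H, _, _, _, π, ξ, hξ, rfl⟩ := hf.exists_isCyclicVector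
  refine ⟨H, _, _, _, π, hξ.isIrredRepC_of_mem_extremePoints (fun h0 => ?_) hext, fun j h0 => ?_⟩
  · simpa [matrixCoeff_apply, h0] using hφv 0
  · simpa [matrixCoeff_apply, h0] using hφv j

end QuasiState

section ClosedRightIdeal
variable {A : Type*} [NonUnitalCStarAlgebra A]

/-- `V` is a closed right ideal of the C⋆-algebra `A`. -/
structure IsClosedRightIdeal (V : Submodule ℂ A) : Prop where
  isClosed : IsClosed (V : Set A)
  mul_mem : ∀ v ∈ V, ∀ a, v * a ∈ V

theorem isClosedRightIdeal_ker_mulLeft (x : A) :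
    IsClosedRightIdeal (LinearMap.mulLeft ℂ x).ker where
  isClosed := isClosed_singleton.preimage (continuous_const_mul x)
  mul_mem v hv a := by
    rw [LinearMap.mem_ker, LinearMap.mulLeft_apply] at hv ⊢
    rw [← mul_assoc, hv, zero_mul]

theorem isClosedRightIdeal_eqLocus_mulLeft (x : A) :
    IsClosedRightIdeal (LinearMap.eqLocus (LinearMap.mulLeft ℂ x) LinearMap.id) where
  isClosed := isClosed_eq (continuous_const_mul x) continuous_id
  mul_mem v hv a := by
    rw [LinearMap.mem_eqLocus, LinearMap.mulLeft_apply, LinearMap.id_apply] at hv ⊢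
    rw [← mul_assoc, hv]

variable {V : Submodule ℂ A}

theorem IsClosedRightIdeal.cfcₙ_mem (hV : IsClosedRightIdeal V) {y : A} (hy : IsSelfAdjoint y)
    (hyV : y ∈ V) (f : ℝ → ℝ) : cfcₙ f y ∈ V := by
  let W : NonUnitalStarSubalgebra ℂ A :=
    { carrier := {a | a ∈ V ∧ star a ∈ V}
      add_mem' := fun ha hb => ⟨V.add_mem ha.1 hb.1, star_add (R := A) _ _ ▸ V.add_mem ha.2 hb.2⟩
      zero_mem' := ⟨V.zero_mem, (star_zero A).symm ▸ V.zero_mem⟩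
      mul_mem' := fun ha hb =>
        ⟨hV.mul_mem _ ha.1 _, star_mul (R := A) _ _ ▸ hV.mul_mem _ hb.2 _⟩
      smul_mem' := fun c a ha => ⟨V.smul_mem _ ha.1, star_smul c a ▸ V.smul_mem _ ha.2⟩
      star_mem' := fun ha => ⟨ha.2, (star_star (R := A) _).symm ▸ ha.1⟩ }
  have : IsClosed (W : Set A) := hV.isClosed.inter (hV.isClosed.preimage continuous_star)
  exact (_root_.cfcₙ_mem (𝕜' := ℂ) (s := W) f ⟨hyV, by rwa [hy.star_eq]⟩ : cfcₙ f y ∈ W).1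

theorem nonneg_of_mem_quasispectrum_mul_star (u : A) {t : ℝ}
    (ht : t ∈ quasispectrum ℝ (u * star u)) : 0 ≤ t := by
  let _ := CStarAlgebra.spectralOrder A
  let _ := CStarAlgebra.spectralOrderedRing A
  exact quasispectrum_nonneg_of_nonneg _ (mul_star_self_nonneg u) t ht

theorem cfcₙ_mul_mul_star (u : A) {f : ℝ → ℝ} (hf : Continuous f) (hf0 : f 0 = 0) :
    (cfcₙ f (u * star u) * u) * star (cfcₙ f (u * star u) * u) =
      cfcₙ (fun t => f t * t * f t) (u * star u) := by
  rw [cfcₙ_mul (fun t => f t * t) f _, cfcₙ_mul f (fun t => t), cfcₙ_id' ℝ (u * star u), star_mul,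
    (cfcₙ_predicate f (u * star u) : IsSelfAdjoint _).star_eq, mul_assoc, mul_assoc, mul_assoc]

theorem cfcₙ_max_sub_ne_zero {u : A} {r : ℝ} (hr : 0 ≤ r) (hlt : r < ‖u * star u‖) :
    cfcₙ (fun t : ℝ => max 0 (t - r)) (u * star u) ≠ 0 := by
  intro h0
  have hspec : ∀ t ∈ quasispectrum ℝ (u * star u), t ≤ r := by
    intro t ht
    have := norm_apply_le_norm_cfcₙ (fun t : ℝ => max 0 (t - r)) (u * star u) ht
    rw [h0, norm_zero, norm_le_zero_iff] at this
    linarith [le_max_right 0 (t - r)]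
  refine hlt.not_ge ?_
  rw [← cfcₙ_id' ℝ (u * star u)]
  refine norm_cfcₙ_le fun t ht => ?_
  rw [Real.norm_of_nonneg (nonneg_of_mem_quasispectrum_mul_star u ht)]
  exact hspec t ht

theorem exists_continuous_normalizer {r : ℝ} (hr : 0 < r) : ∃ f : ℝ → ℝ, Continuous f ∧ f 0 = 0 ∧
    (∀ t, 0 ≤ t → f t * t * f t ∈ Set.Icc 0 1) ∧ ∀ t, r ≤ t → f t * t * f t = 1 := by
  have hpos (t : ℝ) : 0 < max t r := lt_max_of_lt_right hr
  have hcube (t : ℝ) : t / (max t r * √(max t r)) * t * (t / (max t r * √(max t r))) =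
      (t / max t r) ^ 3 := by
    have := hpos t
    field_simp
    rw [Real.sq_sqrt this.le]
  refine ⟨fun t => t / (max t r * √(max t r)), ?_, by simp, fun t ht => ?_, fun t ht => ?_⟩
  · exact continuous_id.div (by fun_prop) fun t => (mul_pos (hpos t) (Real.sqrt_pos.2 (hpos t))).ne'
  · have h0 : 0 ≤ t / max t r := div_nonneg ht (hpos t).le
    rw [hcube]
    exact ⟨pow_nonneg h0 3, pow_le_one₀ h0 ((div_le_one (hpos t)).2 (le_max_left t r))⟩
  · rw [hcube, max_eq_left ht, div_self (hr.trans_le ht).ne', one_pow]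

theorem exists_cutoff {u : A} (hu : u ≠ 0) : ∃ p d : A, ‖p * u‖ ≤ 1 ∧
    (p * u) * star (p * u) * d = d ∧ d ≠ 0 ∧ IsSelfAdjoint d ∧
    ∀ V : Submodule ℂ A, IsClosedRightIdeal V → u * star u ∈ V → p ∈ V ∧ d ∈ V := by
  have hy : 0 < ‖u * star u‖ := by
    rw [CStarRing.norm_self_mul_star]
    exact mul_pos (norm_pos_iff.2 hu) (norm_pos_iff.2 hu)
  set r := ‖u * star u‖ / 2 with hr
  obtain ⟨f, hf, hf0, hf_mem, hf_one⟩ := exists_continuous_normalizer (half_pos hy)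
  have hsa := IsSelfAdjoint.mul_star_self u
  have hg0 : max 0 (0 - r) = 0 := max_eq_left (by linarith)
  refine ⟨cfcₙ f (u * star u), cfcₙ (fun t => max 0 (t - r)) (u * star u), ?_, ?_,
    cfcₙ_max_sub_ne_zero (half_pos hy).le (half_lt_self hy), cfcₙ_predicate _ _,
    fun V hV huV => ⟨hV.cfcₙ_mem hsa huV f, hV.cfcₙ_mem hsa huV _⟩⟩
  · have hsq : ‖cfcₙ f (u * star u) * u‖ * ‖cfcₙ f (u * star u) * u‖ ≤ 1 := by
      rw [← CStarRing.norm_self_mul_star, cfcₙ_mul_mul_star u hf hf0]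
      refine norm_cfcₙ_le fun t ht => ?_
      have := hf_mem t (nonneg_of_mem_quasispectrum_mul_star u ht)
      rw [Real.norm_of_nonneg this.1]
      exact this.2
    exact (abs_le_one_iff_mul_self_le_one.2 hsq).trans' (le_abs_self _)
  · rw [cfcₙ_mul_mul_star u hf hf0, ← cfcₙ_mul (fun t => f t * t * f t) _ _
      (by fun_prop) (by simp [hf0]) (by fun_prop) hg0]
    refine cfcₙ_congr fun t _ => ?_
    rcases le_total t r with h | h
    · rw [max_eq_left (sub_nonpos.2 h), mul_zero]
    · rw [hf_one t h, one_mul]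

end ClosedRightIdeal

section IrredRepsFiniteDimensional
variable {A : Type} [NonUnitalCStarAlgebra A]

variable (A) in
/-- Every irreducible representation of the C⋆-algebra `A` is finite dimensional. -/
def IrredRepsFiniteDimensional : Prop :=
  ∀ (H : Type) [NormedAddCommGroup H] [InnerProductSpace ℂ H] [CompleteSpace H]
    (π : A →⋆ₙₐ[ℂ] (H →L[ℂ] H)), IsIrredRepC π → FiniteDimensional ℂ H

/-- A finite row of contractions with orthogonal initial spaces, all of whose final spaces contain
the range of the nonzero element `d`. In an `n`-dimensional irreducible representation not
killing `d` such a row has at most `n` entries. -/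
structure IsOrthogonalRow (s : Finset A) (d : A) : Prop where
  ne_zero : d ≠ 0
  norm_le_one : ∀ v ∈ s, ‖v‖ ≤ 1
  mul_star_mul : ∀ v ∈ s, v * star v * d = d
  pairwise : (s : Set A).Pairwise fun v w => v * star w = 0

theorem isOrthogonalRow_empty {d : A} (hd : d ≠ 0) : IsOrthogonalRow ∅ d :=
  ⟨hd, by simp, by simp, by simp⟩

theorem IsOrthogonalRow.insert_entry [DecidableEq A] {s : Finset A} {d e v : A}
    (hs : IsOrthogonalRow s d) (he : e ≠ 0) (hse : ∀ w ∈ s, w * star w * e = e) (hv : ‖v‖ ≤ 1)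
    (hve : v * star v * e = e) (horth : ∀ w ∈ s, w * star v = 0) :
    IsOrthogonalRow (insert v s) e ∧ s ⊂ insert v s := by
  have hvs : v ∉ s := fun h => he (by rw [← hve, horth v h, zero_mul])
  refine ⟨⟨he, by simpa using ⟨hv, hs.norm_le_one⟩, by simpa using ⟨hve, hse⟩, ?_⟩,
    Finset.ssubset_insert hvs⟩
  rw [Finset.coe_insert, Set.pairwise_insert]
  refine ⟨hs.pairwise, fun w hw _ => ⟨?_, horth w hw⟩⟩
  rw [← star_eq_zero, star_mul, star_star, horth w hw]

section Representation
variable {L : Type} [NormedAddCommGroup L] [InnerProductSpace ℂ L] [CompleteSpace L]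
  {σ : A →⋆ₙₐ[ℂ] (L →L[ℂ] L)}

theorem exists_quasiState_apply_eq_one (hσ : Function.Injective σ) {d : A} (hd : d ≠ 0) :
    ∃ φ ∈ quasiStates A, ∀ x, x * d = d → φ x = 1 := by
  obtain ⟨h, hh⟩ : ∃ h, σ d h ≠ 0 := by
    by_contra! hzero
    exact hd (hσ (by rw [map_zero]; exact ContinuousLinearMap.ext hzero))
  have hnorm : ‖σ d h‖ ≠ 0 := norm_ne_zero_iff.2 hh
  set w := ((‖σ d h‖⁻¹ : ℝ) : ℂ) • σ d h with hw
  have hw1 : ‖w‖ = 1 := by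
    rw [hw, norm_smul, Complex.norm_real, norm_inv, norm_norm, inv_mul_cancel₀ hnorm]
  refine ⟨_, matrixCoeff_self_mem_quasiStates σ hw1.le, fun x hx => ?_⟩
  rw [matrixCoeff_apply, show σ x w = w by rw [hw, map_smul, ← rep_mul_apply, hx],
    inner_self_eq_norm_sq_to_K, hw1]
  norm_num

theorem exists_isIrredRepC_apply_ne_zero (hσ : Function.Injective σ) {u : A} (hu : u ≠ 0) :
    ∃ (H : Type) (_ : NormedAddCommGroup H) (_ : InnerProductSpace ℂ H) (_ : CompleteSpace H)
      (π : A →⋆ₙₐ[ℂ] (H →L[ℂ] H)), IsIrredRepC π ∧ π u ≠ 0 := by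
  obtain ⟨p, d, hnorm, hd, hd0, -⟩ := exists_cutoff hu
  obtain ⟨φ, hφ, hφ1⟩ := exists_quasiState_apply_eq_one hσ hd0
  obtain ⟨H, _, _, _, π, hπ, hne⟩ := exists_isIrredRepC_of_forall_exists_quasiState
    (v := fun _ => (p * u) * star (p * u))
    (fun _ => by
      rw [CStarRing.norm_self_mul_star]
      exact mul_le_one₀ hnorm (norm_nonneg _) hnorm)
    fun _ => ⟨φ, hφ, fun _ _ => hφ1 _ hd⟩
  refine ⟨H, _, _, _, π, hπ, fun h => hne 0 ?_⟩
  rw [map_mul, map_mul, h, mul_zero, zero_mul]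

theorem IrredRepsFiniteDimensional.exists_eq_zero_of_pairwise (hA : IrredRepsFiniteDimensional A)
    (hσ : Function.Injective σ) {v : ℕ → A} (hnorm : ∀ j, ‖v j‖ ≤ 1)
    (horth : Pairwise fun i j => v i * star (v j) = 0) :
    ∃ k, ∀ d, (∀ j ≤ k, v j * star (v j) * d = d) → d = 0 := by
  by_contra! hcon
  choose d hd hd0 using hcon
  obtain ⟨H, _, _, _, π, hπ, hne⟩ := exists_isIrredRepC_of_forall_exists_quasiState
    (v := fun j => v j * star (v j))
    (fun j => by
      rw [CStarRing.norm_self_mul_star]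
      exact mul_le_one₀ (hnorm j) (norm_nonneg _) (hnorm j))
    fun k =>
      let ⟨φ, hφ, hφ1⟩ := exists_quasiState_apply_eq_one hσ (hd0 k)
      ⟨φ, hφ, fun j hj => hφ1 _ (hd k j hj)⟩
  have hex (j : ℕ) : ∃ h, π (star (v j)) h ≠ 0 := by
    by_contra! hzero
    exact hne j (by rw [map_mul, (ContinuousLinearMap.ext hzero : π (star (v j)) = 0), mul_zero])
  choose h hh using hex
  have hperp : Pairwise fun i j => ⟪π (star (v i)) (h i), π (star (v j)) (h j)⟫_ℂ = 0 := by
    intro i j hij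
    simp only [inner_rep_left, star_star, ← rep_mul_apply, horth hij, map_zero,
      zero_apply, inner_zero_right]
  have := hA H π hπ
  have := (linearIndependent_of_ne_zero_of_inner_eq_zero hh hperp).finite
  exact not_finite ℕ

theorem IrredRepsFiniteDimensional.exists_maximal_row (hA : IrredRepsFiniteDimensional A)
    (hσ : Function.Injective σ) {Q : Finset A → A → Prop}
    (hQ : ∃ s d, IsOrthogonalRow s d ∧ Q s d) :
    ∃ s d, IsOrthogonalRow s d ∧ Q s d ∧ ∀ t e, s ⊂ t → IsOrthogonalRow t e → ¬ Q t e := by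
  by_contra! hcon
  obtain ⟨s₀, d₀, h₀⟩ := hQ
  let S := {s : Finset A // ∃ d, IsOrthogonalRow s d ∧ Q s d}
  have : Nonempty S := ⟨⟨s₀, d₀, h₀⟩⟩
  have : NoMaxOrder S := ⟨fun ⟨s, d, hs, hsQ⟩ =>
    let ⟨t, e, hst, ht, htQ⟩ := hcon s d hs hsQ
    ⟨⟨t, e, ht, htQ⟩, hst⟩⟩
  obtain ⟨f, hf⟩ := Nat.exists_strictMono S
  choose d hd _ using fun j => (f j).2
  choose v hv hv' using fun j => Finset.exists_of_ssubset (hf (Nat.lt_succ_self j))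
  have hmem {i j : ℕ} (hij : i < j) : v i ∈ (f j).1 := hf.monotone hij (hv i)
  have hne {i j : ℕ} (hij : i < j) : v i ≠ v j := fun h => hv' j (h ▸ hmem hij)
  obtain ⟨k, hk⟩ := hA.exists_eq_zero_of_pairwise hσ
    (fun j => (hd (j + 1)).norm_le_one _ (hv j)) (fun i j hij => by
      rcases hij.lt_or_gt with h | h
      · exact (hd (j + 1)).pairwise (hmem (h.trans (Nat.lt_succ_self j))) (hv j) (hne h)
      · exact (hd (i + 1)).pairwise (hv i) (hmem (h.trans (Nat.lt_succ_self i))) (hne h).symm)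
  exact (hd (k + 1)).ne_zero
    (hk _ fun j hj => (hd (k + 1)).mul_star_mul _ (hmem (Nat.lt_succ_of_le hj)))

end Representation

end IrredRepsFiniteDimensional

section Nilpotent

theorem exists_continuous_bumps {F : Set ℝ} (hF : F.Finite) (r : ℝ) :
    ∃ f g : ℝ → ℝ, Continuous f ∧ Continuous g ∧ (∀ t, g t * f t = f t) ∧
      f r = 1 ∧ g r = 1 ∧ ∀ t ∈ F, t ≠ r → f t = 0 ∧ g t = 0 := by
  obtain ⟨u, hu0, hu1, -⟩ := exists_continuous_zero_one_of_isClosed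
    (hF.subset Set.sdiff_subset : (F \ {r}).Finite).isClosed (isClosed_singleton (x := r))
    Set.disjoint_sdiff_left
  have hur : u r = 1 := hu1 rfl
  refine ⟨fun t => max 0 (2 * u t - 1), fun t => min 1 (2 * u t), by fun_prop, by fun_prop,
    fun t => ?_, by norm_num [hur], by norm_num [hur], fun t ht htr => ?_⟩
  · rcases le_total (2 * u t) 1 with h | h
    · simp only [max_eq_left (sub_nonpos.2 h), mul_zero]
    · simp only [min_eq_left h, one_mul]
  · have hut : u t = 0 := hu0 ⟨ht, htr⟩
    norm_num [hut]

theorem commute_of_finite_spectrum {M : Type*} [CStarAlgebra M] {b c : M} (hb : IsSelfAdjoint b)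
    (hc : IsSelfAdjoint c) (hfin : (spectrum ℝ b).Finite)
    (h : ∀ f g : ℝ → ℝ, Continuous f → Continuous g → f 0 = 0 → g 0 = 0 → (∀ t, g t * f t = f t) →
      c * cfc f b = cfc g b * c * cfc f b) : Commute b c := by
  set F : Finset ℝ := (hfin.insert 0).toFinset with hF
  have hmem {t : ℝ} (ht : t ∈ spectrum ℝ b) : t ∈ F := by simp [hF, ht]
  have h0F : (0 : ℝ) ∈ F := by simp [hF]
  choose f g hf hg hgf hfr hgr hne using exists_continuous_bumps F.finite_toSet
  -- `f r` and `g r` agree on the spectrum, so that `cfc (f r) b` is a projection reducing `c`.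
  have hcomm : ∀ r ∈ F.erase 0, Commute (cfc (f r) b) c := by
    intro r hr
    have hr0 := (Finset.ne_of_mem_erase hr).symm
    have hEc : c * cfc (f r) b = cfc (f r) b * c * cfc (f r) b := by
      convert h (f r) (g r) (hf r) (hg r) (hne r 0 h0F hr0).1 (hne r 0 h0F hr0).2 (hgf r) using 3
      refine cfc_congr fun t ht => ?_
      rcases eq_or_ne t r with rfl | htr
      · rw [hfr, hgr]
      · rw [(hne r t (hmem ht) htr).1, (hne r t (hmem ht) htr).2]
    have hsa : IsSelfAdjoint (cfc (f r) b) := cfc_predicate _ _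
    have hcE := congrArg star hEc
    simp only [star_mul, hsa.star_eq, hc.star_eq, ← mul_assoc] at hcE
    exact hcE.trans hEc.symm
  have hsum : b = ∑ r ∈ F.erase 0, r • cfc (f r) b := by
    simp only [← cfc_const_mul _ _ b (hf _).continuousOn]
    rw [← cfc_sum (fun r t => r * f r t) _ _ fun r _ => (continuous_const.mul (hf r)).continuousOn]
    conv_lhs => rw [← cfc_id' ℝ b]
    refine cfc_congr fun t ht => ?_
    rw [Finset.sum_apply]
    rcases eq_or_ne t 0 with rfl | ht0
    · exact (Finset.sum_eq_zero fun r hr => by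
        rw [(hne r 0 h0F (Finset.ne_of_mem_erase hr).symm).1, mul_zero]).symm
    · rw [Finset.sum_eq_single t, hfr, mul_one]
      · exact fun r _ hrt => by rw [(hne r t (hmem ht) hrt.symm).1, mul_zero]
      · exact fun h => absurd (Finset.mem_erase.2 ⟨ht0, hmem ht⟩) h
  rw [hsum]
  exact Commute.sum_left _ _ _ fun r hr => (hcomm r hr).smul_left r

theorem finite_real_spectrum {H : Type*} [NormedAddCommGroup H] [InnerProductSpace ℂ H]
    [CompleteSpace H] [FiniteDimensional ℂ H] (T : H →L[ℂ] H) : (spectrum ℝ T).Finite := by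
  have h := AlgEquiv.spectrum_eq (Module.End.toContinuousLinearMap H).symm T
  rw [← spectrum.preimage_algebraMap ℂ, ← h]
  exact (Module.End.finite_spectrum _).preimage (FaithfulSMul.algebraMap_injective ℝ ℂ).injOn

variable {A : Type} [NonUnitalCStarAlgebra A]
  {L : Type} [NormedAddCommGroup L] [InnerProductSpace ℂ L] [CompleteSpace L]
  {σ : A →⋆ₙₐ[ℂ] (L →L[ℂ] L)}

theorem cfcₙ_sub_mul_sq_eq_zero {b : A} (c : A) {f g : ℝ → ℝ} (hf : Continuous f)
    (hg : Continuous g) (hf0 : f 0 = 0) (hg0 : g 0 = 0) (hgf : ∀ t, g t * f t = f t) :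
    ((c - cfcₙ g b * c) * cfcₙ f b) * ((c - cfcₙ g b * c) * cfcₙ f b) = 0 := by
  have hfg : cfcₙ f b * cfcₙ g b = cfcₙ f b := by
    rw [← cfcₙ_mul f g b]
    exact cfcₙ_congr fun t _ => by rw [mul_comm, hgf]
  have : cfcₙ f b * (c - cfcₙ g b * c) = 0 := by rw [mul_sub, ← mul_assoc, hfg, sub_self]
  rw [mul_assoc, ← mul_assoc (cfcₙ f b), this, zero_mul, mul_zero]

theorem IrredRepsFiniteDimensional.exists_nilpotent (hA : IrredRepsFiniteDimensional A)
    (hσ : Function.Injective σ) {b c : A} (hb : IsSelfAdjoint b) (hc : IsSelfAdjoint c)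
    (hbc : b * c ≠ c * b) : ∃ t : A, t * t = 0 ∧ t ≠ 0 ∧
      ∀ V : Submodule ℂ A, IsClosedRightIdeal V → b ∈ V → c ∈ V → t ∈ V ∧ star t ∈ V := by
  obtain ⟨H, _, _, _, ρ, hρ, hne⟩ := exists_isIrredRepC_apply_ne_zero hσ (sub_ne_zero.2 hbc)
  have := hA H ρ hρ
  have hmap {f : ℝ → ℝ} (hf : Continuous f) (hf0 : f 0 = 0) : ρ (cfcₙ f b) = cfc f (ρ b) := by
    rw [NonUnitalStarAlgHom.map_cfcₙ ρ f b (by fun_prop) hf0 (continuous_rep ρ),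
      cfcₙ_eq_cfc (hf0 := hf0)]
  by_contra! hcon
  have hzero (f g : ℝ → ℝ) (hf : Continuous f) (hg : Continuous g) (hf0 : f 0 = 0) (hg0 : g 0 = 0)
      (hgf : ∀ t, g t * f t = f t) : (c - cfcₙ g b * c) * cfcₙ f b = 0 := by
    by_contra ht
    obtain ⟨V, hV, hbV, hcV, hnot⟩ := hcon _ (cfcₙ_sub_mul_sq_eq_zero c hf hg hf0 hg0 hgf) ht
    have hcfc (k : ℝ → ℝ) : cfcₙ k b ∈ V := hV.cfcₙ_mem hb hbV k
    refine hnot ?_ ?_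
    · exact hV.mul_mem _ (V.sub_mem hcV (hV.mul_mem _ (hcfc g) c)) _
    · rw [star_mul, (cfcₙ_predicate f b : IsSelfAdjoint _).star_eq]
      exact hV.mul_mem _ (hcfc f) _
  refine hne ?_
  rw [map_sub, map_mul, map_mul, sub_eq_zero]
  refine commute_of_finite_spectrum (hb.map ρ) (hc.map ρ) (finite_real_spectrum _) ?_
  intro f g hf hg hf0 hg0 hgf
  have := congrArg ρ (hzero f g hf hg hf0 hg0 hgf)
  rwa [map_zero, map_mul, map_sub, map_mul, hmap hf hf0, hmap hg hg0, sub_mul, sub_eq_zero] at this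

end Nilpotent

section Structure
variable {A : Type} [NonUnitalCStarAlgebra A]

theorem IsOrthogonalRow.exists_insert [DecidableEq A] {s : Finset A} {d u : A}
    (hs : IsOrthogonalRow s d) (hu : u ≠ 0) (hfix : ∀ w ∈ s, w * star w * u = u)
    (horth : ∀ w ∈ s, u * star w = 0) :
    ∃ p e, IsOrthogonalRow (insert (p * u) s) e ∧ s ⊂ insert (p * u) s ∧ IsSelfAdjoint e ∧
      ∀ V : Submodule ℂ A, IsClosedRightIdeal V → u * star u ∈ V → p ∈ V ∧ e ∈ V := by
  obtain ⟨p, e, hnorm, hpe, he, hsa, hmem⟩ := exists_cutoff hu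
  refine ⟨p, e, and_assoc.1 ⟨hs.insert_entry he (fun w hw => ?_) hnorm hpe fun w hw => ?_,
    hsa, hmem⟩⟩
  · refine (hmem _ (isClosedRightIdeal_eqLocus_mulLeft (w * star w)) ?_).2
    rw [LinearMap.mem_eqLocus, LinearMap.mulLeft_apply, LinearMap.id_apply, ← mul_assoc, hfix w hw]
  · rw [← star_star w, ← star_mul, mul_assoc, horth w hw, mul_zero, star_zero]

theorem commute_mul_mul_of_isSelfAdjoint {d : A}
    (h : ∀ a b, IsSelfAdjoint a → IsSelfAdjoint b → Commute (d * a * d) (d * b * d)) (a b : A) :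
    Commute (d * a * d) (d * b * d) := by
  have hreal (a b : A) (ha : IsSelfAdjoint a) : Commute (d * a * d) (d * b * d) := by
    rw [← realPart_add_I_smul_imaginaryPart b, mul_add, add_mul, mul_smul_comm, smul_mul_assoc]
    exact (h a _ ha (realPart b).2).add_right ((h a _ ha (imaginaryPart b).2).smul_right _)
  rw [← realPart_add_I_smul_imaginaryPart a, mul_add, add_mul, mul_smul_comm, smul_mul_assoc]
  exact (hreal _ b (realPart a).2).add_left ((hreal _ b (imaginaryPart a).2).smul_left _)

theorem IsOrthogonalRow.exists_extension_of_nilpotent {s : Finset A} {d t : A}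
    (hs : IsOrthogonalRow s d) (hsd : ∀ w ∈ s, w * d = 0) (ht0 : t ≠ 0) (ht : t * t = 0)
    (hmem : ∀ V : Submodule ℂ A, IsClosedRightIdeal V → d ∈ V → t ∈ V ∧ star t ∈ V) :
    ∃ s' e, s ⊂ s' ∧ IsOrthogonalRow s' e ∧ IsSelfAdjoint e ∧ ∀ w ∈ s', w * e = 0 := by
  classical
  have hker (w : A) (hw : w ∈ s) : t ∈ (LinearMap.mulLeft ℂ w).ker ∧
      star t ∈ (LinearMap.mulLeft ℂ w).ker :=
    hmem _ (isClosedRightIdeal_ker_mulLeft w) (hsd w hw)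
  obtain ⟨p, e, hrow, hss, he, hV⟩ := hs.exists_insert (u := star t) (star_ne_zero.2 ht0)
    (fun w hw => (hmem _ (isClosedRightIdeal_eqLocus_mulLeft (w * star w))
      (hs.mul_star_mul w hw)).2)
    (fun w hw => by rw [← star_mul, show w * t = 0 from (hker w hw).1, star_zero])
  refine ⟨_, e, hss, hrow, he, fun w hw => ?_⟩
  rcases Finset.mem_insert.1 hw with rfl | hw
  · have : star t * e = 0 := (hV _ (isClosedRightIdeal_ker_mulLeft (star t)) (by
      rw [LinearMap.mem_ker, LinearMap.mulLeft_apply, ← mul_assoc, ← star_mul, ht, star_zero,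
        zero_mul])).2
    rw [mul_assoc, this, mul_zero]
  · have hw' := isClosedRightIdeal_ker_mulLeft w
    exact (hV _ hw' (hw'.mul_mem _ (hker w hw).2 _)).2

variable {L : Type} [NormedAddCommGroup L] [InnerProductSpace ℂ L] [CompleteSpace L]
  {σ : A →⋆ₙₐ[ℂ] (L →L[ℂ] L)}

theorem IrredRepsFiniteDimensional.exists_commute_mul_mul [Nontrivial A]
    (hA : IrredRepsFiniteDimensional A) (hσ : Function.Injective σ) :
    ∃ d : A, IsSelfAdjoint d ∧ d ≠ 0 ∧ ∀ a b, Commute (d * a * d) (d * b * d) := by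
  obtain ⟨a, ha⟩ := exists_ne (0 : A)
  obtain ⟨s, d, hs, ⟨hd, hsd⟩, hmax⟩ := hA.exists_maximal_row hσ
    (Q := fun s d => IsSelfAdjoint d ∧ ∀ w ∈ s, w * d = 0)
    ⟨∅, a * star a, isOrthogonalRow_empty ((CStarRing.mul_star_self_eq_zero_iff a).not.2 ha),
      IsSelfAdjoint.mul_star_self a, by simp⟩
  refine ⟨d, hd, hs.ne_zero, commute_mul_mul_of_isSelfAdjoint fun a b ha hb => ?_⟩
  by_contra hne
  have hsa {a : A} (ha : IsSelfAdjoint a) : IsSelfAdjoint (d * a * d) := by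
    simpa only [hd.star_eq] using ha.conjugate d
  obtain ⟨t, htt, ht0, ht⟩ := hA.exists_nilpotent hσ (hsa ha) (hsa hb) hne
  have hd_mem (V : Submodule ℂ A) (hV : IsClosedRightIdeal V) (hdV : d ∈ V) (a : A) :
      d * a * d ∈ V := mul_assoc d a d ▸ hV.mul_mem _ hdV _
  obtain ⟨s', e, hss, hrow, he, hse⟩ := hs.exists_extension_of_nilpotent hsd ht0 htt
    fun V hV hdV => ht V hV (hd_mem V hV hdV a) (hd_mem V hV hdV b)
  exact hmax s' e hss hrow ⟨he, hse⟩

theorem isClosedRightIdeal_closure_range_mulLeft (x : A) :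
    IsClosedRightIdeal (LinearMap.mulLeft ℂ x).range.topologicalClosure where
  isClosed := Submodule.isClosed_topologicalClosure _
  mul_mem v hv a := map_mem_closure (f := (· * a)) (continuous_mul_const a) hv <| by
    rintro _ ⟨b, rfl⟩
    exact ⟨b * a, (mul_assoc x b a).symm⟩

theorem commute_of_mem_closure_range_mulLeft {x : A} (hx : IsSelfAdjoint x)
    (hcomm : ∀ a b, Commute (x * a * x) (x * b * x)) {u v u' v' : A}
    (hu : u ∈ (LinearMap.mulLeft ℂ x).range.topologicalClosure)
    (hv : v ∈ (LinearMap.mulLeft ℂ x).range.topologicalClosure)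
    (hu' : u' ∈ (LinearMap.mulLeft ℂ x).range.topologicalClosure)
    (hv' : v' ∈ (LinearMap.mulLeft ℂ x).range.topologicalClosure) :
    Commute (u * star v) (u' * star v') := by
  set K : Set A := Set.range fun a => x * a * x
  have hK {u v : A} (hu : u ∈ (LinearMap.mulLeft ℂ x).range.topologicalClosure)
      (hv : v ∈ (LinearMap.mulLeft ℂ x).range.topologicalClosure) : u * star v ∈ closure K := by
    refine map_mem_closure₂ (f := fun u v => u * star v) (by fun_prop) hu hv ?_
    rintro _ ⟨a, rfl⟩ _ ⟨b, rfl⟩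
    exact ⟨a * star b, by simp only [LinearMap.mulLeft_apply, star_mul, hx.star_eq, mul_assoc]⟩
  have hKK : closure K ⊆ K.centralizer := by
    refine closure_minimal ?_ K.isClosed_centralizer
    rintro _ ⟨a, rfl⟩ _ ⟨b, rfl⟩
    exact hcomm b a
  have hKK' : closure K ⊆ (closure K).centralizer :=
    closure_minimal (fun y hy z hz => (hKK hz y hy).symm) (closure K).isClosed_centralizer
  exact hKK' (hK hu' hv') _ (hK hu hv)

theorem IsOrthogonalRow.exists_extension_of_ne_sum {R : Submodule ℂ A} (hR : IsClosedRightIdeal R)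
    (hcomm : ∀ u ∈ R, ∀ v ∈ R, ∀ u' ∈ R, ∀ v' ∈ R, Commute (u * star v) (u' * star v'))
    {s : Finset A} {d : A} (hs : IsOrthogonalRow s d) (hsR : ∀ v ∈ s, v ∈ R) (hd : d ∈ R) {a : A}
    (ha : d * a ≠ ∑ v ∈ s, d * a * star v * v) :
    ∃ s' e, s ⊂ s' ∧ IsOrthogonalRow s' e ∧ (∀ v ∈ s', v ∈ R) ∧ e ∈ R := by
  classical
  set u := d * a - ∑ v ∈ s, d * a * star v * v with hu
  have huR : u ∈ R := R.sub_mem (hR.mul_mem _ hd _) <| R.sum_mem fun v _ => by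
    rw [mul_assoc, mul_assoc]
    exact hR.mul_mem _ hd _
  have hfix (w : A) (hw : w ∈ s) : w * star w * u = u := by
    simp only [hu, mul_sub, Finset.mul_sum, ← mul_assoc]
    rw [hs.mul_star_mul w hw]
  have horth (w : A) (hw : w ∈ s) : u * star w = 0 := by
    rw [hu, sub_mul, Finset.sum_mul, Finset.sum_eq_single w, sub_eq_zero]
    · have := hcomm _ (hR.mul_mem _ hd a) w (hsR w hw) w (hsR w hw) w (hsR w hw)
      rw [Commute, SemiconjBy, ← mul_assoc (w * star w), ← mul_assoc (w * star w),
        hs.mul_star_mul w hw] at this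
      rw [mul_assoc (d * a * star w), this]
    · exact fun v hv hvw => by rw [mul_assoc, hs.pairwise hv hw hvw, mul_zero]
    · exact fun h => absurd hw h
  obtain ⟨p, e, hrow, hss, -, hV⟩ := hs.exists_insert (sub_ne_zero.2 ha) hfix horth
  obtain ⟨hp, he⟩ := hV R hR (hR.mul_mem _ huR _)
  exact ⟨_, e, hss, hrow, Finset.forall_mem_insert _ _ _ |>.2 ⟨hR.mul_mem _ hp _, hsR⟩, he⟩

theorem IrredRepsFiniteDimensional.exists_eq_sum_mul_star_mul [Nontrivial A]
    (hA : IrredRepsFiniteDimensional A) (hσ : Function.Injective σ) :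
    ∃ (R : Submodule ℂ A) (d : A) (s : Finset A),
      (∀ u ∈ R, ∀ v ∈ R, ∀ u' ∈ R, ∀ v' ∈ R, Commute (u * star v) (u' * star v')) ∧
      (∀ v ∈ R, ∀ a, v * a ∈ R) ∧
      d ∈ R ∧ d ≠ 0 ∧ (∀ v ∈ s, v ∈ R) ∧ ∀ a, d * a = ∑ v ∈ s, d * a * star v * v := by
  obtain ⟨x, hx, hx0, hxcomm⟩ := hA.exists_commute_mul_mul hσ
  set R := (LinearMap.mulLeft ℂ x).range.topologicalClosure
  have hR : IsClosedRightIdeal R := isClosedRightIdeal_closure_range_mulLeft x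
  have hcomm : ∀ u ∈ R, ∀ v ∈ R, ∀ u' ∈ R, ∀ v' ∈ R, Commute (u * star v) (u' * star v') :=
    fun u hu v hv u' hu' v' hv' => commute_of_mem_closure_range_mulLeft hx hxcomm hu hv hu' hv'
  have hxx : x * x ≠ 0 := by
    have := (CStarRing.mul_star_self_eq_zero_iff x).not.2 hx0
    rwa [hx.star_eq] at this
  obtain ⟨s, d, hs, ⟨hsR, hdR⟩, hmax⟩ := hA.exists_maximal_row hσ
    (Q := fun s d => (∀ v ∈ s, v ∈ R) ∧ d ∈ R)
    ⟨∅, x * x, isOrthogonalRow_empty hxx, by simp, Submodule.le_topologicalClosure _ ⟨x, rfl⟩⟩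
  refine ⟨R, d, s, hcomm, hR.mul_mem, hdR, hs.ne_zero, hsR, fun a => ?_⟩
  by_contra ha
  obtain ⟨s', e, hss, hrow, hext⟩ := hs.exists_extension_of_ne_sum hR hcomm hsR hdR ha
  exact hmax s' e hss hrow hext

end Structure

section NullSubspace
variable {ι E F : Type*} [NormedAddCommGroup E] [NormedSpace ℂ E]
  [NormedAddCommGroup F] [NormedSpace ℂ F]

/-- The subspace of vectors `x` such that `T i x` tends to `0` along the filter `l`. -/
def nullSubspace (l : Filter ι) (T : ι → E →L[ℂ] F) : Submodule ℂ E where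
  carrier := {x | Tendsto (fun i => T i x) l (𝓝 0)}
  add_mem' hx hy := by simpa using Tendsto.add hx hy
  zero_mem' := by simpa using tendsto_const_nhds
  smul_mem' c x hx := by simpa using Tendsto.const_smul hx c

theorem mem_nullSubspace {l : Filter ι} {T : ι → E →L[ℂ] F} {x : E} :
    x ∈ nullSubspace l T ↔ Tendsto (fun i => T i x) l (𝓝 0) := Iff.rfl

theorem isClosed_nullSubspace {l : Filter ι} {T : ι → E →L[ℂ] F} {M : ℝ}
    (hT : ∀ i, ‖T i‖ ≤ M) : IsClosed (nullSubspace l T : Set E) :=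
  isClosed_setOf_tendsto_apply_zero (.of_forall hT)

end NullSubspace

section CommutativeAlgebra
variable {H : Type*} [NormedAddCommGroup H] [InnerProductSpace ℂ H] [CompleteSpace H]

/-- The closure of `C x`, the smallest closed `C`-invariant subspace containing `x`. -/
noncomputable def cyclicSubspace (C : StarSubalgebra ℂ (H →L[ℂ] H)) (x : H) : Submodule ℂ H :=
  (C.toSubalgebra.toSubmodule.map (ContinuousLinearMap.apply ℂ H x).toLinearMap).topologicalClosure

variable {C : StarSubalgebra ℂ (H →L[ℂ] H)}

theorem isClosed_cyclicSubspace (x : H) : IsClosed (cyclicSubspace C x : Set H) :=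
  Submodule.isClosed_topologicalClosure _

instance (x : H) : (cyclicSubspace C x).HasOrthogonalProjection :=
  have := (isClosed_cyclicSubspace (C := C) x).completeSpace_coe
  .ofCompleteSpace _

theorem apply_mem_cyclicSubspace {c : H →L[ℂ] H} (hc : c ∈ C) (x : H) :
    c x ∈ cyclicSubspace C x :=
  Submodule.le_topologicalClosure _ ⟨c, hc, rfl⟩

theorem cyclicSubspace_induction {x y : H} {p : H → Prop} (hy : y ∈ cyclicSubspace C x)
    (hp : IsClosed {z | p z}) (h : ∀ c ∈ C, p (c x)) : p y :=
  closure_minimal (t := {z | p z}) (by rintro _ ⟨c, hc, rfl⟩; exact h c hc) hp hy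

theorem map_mem_cyclicSubspace {c : H →L[ℂ] H} (hc : c ∈ C) {x y : H}
    (hy : y ∈ cyclicSubspace C x) : c y ∈ cyclicSubspace C x :=
  cyclicSubspace_induction (p := fun z => c z ∈ cyclicSubspace C x) hy
    ((isClosed_cyclicSubspace x).preimage c.continuous)
    fun _ hb => apply_mem_cyclicSubspace (mul_mem hc hb) x

theorem commute_starProjection_cyclicSubspace {c : H →L[ℂ] H} (hc : c ∈ C) (x : H) :
    Commute (cyclicSubspace C x).starProjection c :=
  commute_starProjection_of_invariant (fun _ hy => map_mem_cyclicSubspace hc hy)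
    fun _ hy => map_mem_cyclicSubspace (star_mem hc) hy

theorem norm_inner_adjoint_apply_le (hC : ∀ a ∈ C, ∀ b ∈ C, Commute a b) {T : H →L[ℂ] H}
    (hT : ∀ c ∈ C, Commute T c) {x y z : H} (hy : y ∈ cyclicSubspace C x)
    (hz : z ∈ cyclicSubspace C x) : ‖⟪adjoint T y, z⟫_ℂ‖ ≤ ‖T y‖ * ‖z‖ := by
  have hnormal : ∀ c ∈ C, ∀ w, ‖adjoint c w‖ = ‖c w‖ := fun c hc w =>
    ((isStarNormal_iff_norm_eq_adjoint.1 ⟨hC _ (star_mem hc) _ hc⟩) w).symm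
  have hcomm : ∀ {S R : H →L[ℂ] H}, Commute S R → ∀ w, S (R w) = R (S w) := fun h w => congr($h w)
  refine cyclicSubspace_induction (p := fun w => ‖⟪adjoint T w, z⟫_ℂ‖ ≤ ‖T w‖ * ‖z‖) hy
    (isClosed_le ((adjoint T).continuous.inner continuous_const).norm (by fun_prop)) fun a ha => ?_
  refine cyclicSubspace_induction (p := fun w => ‖⟪adjoint T (a x), w⟫_ℂ‖ ≤ ‖T (a x)‖ * ‖w‖) hz
    (isClosed_le (by fun_prop) (by fun_prop)) fun c hc => ?_
  calc ‖⟪adjoint T (a x), c x⟫_ℂ‖ = ‖⟪adjoint c x, adjoint a (T x)⟫_ℂ‖ := by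
        rw [adjoint_inner_left, hcomm (hT c hc), ← adjoint_inner_left,
          ← star_eq_adjoint c, hcomm (hC _ (star_mem hc) a ha), adjoint_inner_right]
    _ ≤ ‖adjoint c x‖ * ‖adjoint a (T x)‖ := norm_inner_le_norm _ _
    _ = ‖T (a x)‖ * ‖c x‖ := by
        rw [hnormal c hc, hnormal a ha, hcomm (hT a ha), mul_comm]

theorem norm_starProjection_adjoint_apply_le (hC : ∀ a ∈ C, ∀ b ∈ C, Commute a b) {T : H →L[ℂ] H}
    (hT : ∀ c ∈ C, Commute T c) {x y : H} (hy : y ∈ cyclicSubspace C x) :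
    ‖(cyclicSubspace C x).starProjection (adjoint T y)‖ ≤ ‖T y‖ := by
  set P := (cyclicSubspace C x).starProjection
  have hmem : ∀ v, P v ∈ cyclicSubspace C x := Submodule.starProjection_apply_mem _
  have hsq : ‖P (adjoint T y)‖ ^ 2 ≤ ‖T y‖ * ‖P (adjoint T y)‖ :=
    calc ‖P (adjoint T y)‖ ^ 2 = RCLike.re ⟪adjoint T y, P (adjoint T y)⟫_ℂ := by
          rw [inner_re_symm, Submodule.re_inner_starProjection_eq_normSq]; rfl
      _ ≤ ‖⟪adjoint T y, P (adjoint T y)⟫_ℂ‖ := RCLike.re_le_norm _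
      _ ≤ _ := norm_inner_adjoint_apply_le hC hT hy (hmem _)
  nlinarith [norm_nonneg (P (adjoint T y)), norm_nonneg (T y)]

theorem nullSubspace_starProjection_mul_eq_top (hC : ∀ a ∈ C, ∀ b ∈ C, Commute a b)
    {ι : Type*} {l : Filter ι} {T : ι → H →L[ℂ] H} {M : ℝ} (hTC : ∀ i, ∀ c ∈ C, Commute (T i) c)
    (hM : ∀ i, ‖T i‖ ≤ M) (hT : nullSubspace l (fun i => adjoint (T i)) = ⊤) (x : H) :
    nullSubspace l (fun i => (cyclicSubspace C x).starProjection * T i) = ⊤ := by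
  set P := (cyclicSubspace C x).starProjection
  have hclosed : IsClosed (nullSubspace l (fun i => P * T i) : Set H) := by
    refine isClosed_nullSubspace (M := ‖P‖ * M) fun i => (norm_mul_le _ _).trans ?_
    gcongr
    exact hM i
  have := hclosed.completeSpace_coe
  have := Submodule.HasOrthogonalProjection.ofCompleteSpace (nullSubspace l (fun i => P * T i))
  rw [← Submodule.orthogonal_eq_bot_iff, eq_bot_iff]
  intro y hy
  have hmem : ∀ j, ∀ w ∈ cyclicSubspace C x, adjoint (T j) w ∈ nullSubspace l fun i => P * T i := by
    intro j w hw
    have hlim : Tendsto (fun i => ‖T j (adjoint (T i) w)‖) l (𝓝 0) := by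
      simpa using (((T j).continuous.tendsto 0).comp
        (mem_nullSubspace.1 (Submodule.eq_top_iff'.1 hT w))).norm
    refine squeeze_zero_norm (fun i => ?_) hlim
    have hTT : ∀ c ∈ C, Commute (T j * adjoint (T i)) c := fun c hc =>
      (hTC j c hc).mul_left (by
        simpa [← star_eq_adjoint] using (hTC i _ (star_mem hc)).star_star)
    have hle := norm_starProjection_adjoint_apply_le hC hTT hw
    rwa [← star_eq_adjoint, star_mul, ← star_eq_adjoint, star_star] at hle
  have hzero : ∀ j, P (T j y) = 0 := fun j => by
    refine (Submodule.starProjection_apply_eq_zero_iff _).2 fun w hw => ?_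
    rw [← adjoint_inner_left]
    exact hy _ (hmem j w hw)
  have hyN : y ∈ nullSubspace l fun i => P * T i :=
    tendsto_const_nhds.congr fun j => (hzero j).symm
  exact inner_self_eq_zero.1 (hy y hyN)

theorem exists_fixing_nullSubspace_eq_top (hC : ∀ a ∈ C, ∀ b ∈ C, Commute a b)
    {ι : Type*} {l : Filter ι} {T : ι → H →L[ℂ] H} {M : ℝ} (hTC : ∀ i, ∀ c ∈ C, Commute (T i) c)
    (hM : ∀ i, ‖T i‖ ≤ M) (hT : nullSubspace l (fun i => adjoint (T i)) = ⊤) (s : Finset H) :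
    ∃ Q : H →L[ℂ] H, (∀ c ∈ C, Commute Q c) ∧ (∀ x ∈ s, Q x = x) ∧
      nullSubspace l (fun i => Q * T i) = ⊤ := by
  classical
  induction s using Finset.induction_on with
  | empty => exact ⟨0, fun c _ => Commute.zero_left c, by simp, by
      refine eq_top_iff.2 fun y _ => ?_
      simpa [mem_nullSubspace] using tendsto_const_nhds⟩
  | insert z s _ ih =>
    obtain ⟨Q, hQC, hQ, hQT⟩ := ih
    set P := (cyclicSubspace C (z - Q z)).starProjection
    have hPz : P (z - Q z) = z - Q z :=
      Submodule.starProjection_eq_self_iff.2 (apply_mem_cyclicSubspace (one_mem C) _)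
    refine ⟨Q + P * (1 - Q), fun c hc => ?_, ?_, ?_⟩
    · exact (hQC c hc).add_left ((commute_starProjection_cyclicSubspace hc _).mul_left
        ((Commute.one_left c).sub_left (hQC c hc)))
    · rw [Finset.forall_mem_insert]
      refine ⟨?_, fun x hx => ?_⟩
      · change Q z + P (z - Q z) = z
        rw [hPz, add_sub_cancel]
      · change Q x + P (x - Q x) = x
        rw [hQ x hx, sub_self, map_zero, add_zero]
    · refine eq_top_iff.2 fun y _ => ?_
      have hQy : Tendsto (fun i => Q (T i y)) l (𝓝 0) :=
        Submodule.eq_top_iff'.1 hQT y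
      have hPy : Tendsto (fun i => P (T i y)) l (𝓝 0) := Submodule.eq_top_iff'.1
        (nullSubspace_starProjection_mul_eq_top hC hTC hM hT (z - Q z)) y
      have hlim := (hQy.add hPy).sub ((P.continuous.tendsto 0).comp hQy)
      rw [map_zero, add_zero, sub_zero] at hlim
      refine hlim.congr fun i => ?_
      change Q (T i y) + P (T i y) - P (Q (T i y)) = Q (T i y) + P (T i y - Q (T i y))
      rw [map_sub, add_sub_assoc]

end CommutativeAlgebra

section Compression
variable {A H : Type} [NonUnitalCStarAlgebra A]
  [NormedAddCommGroup H] [InnerProductSpace ℂ H] [CompleteSpace H]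

theorem IrredRepsFiniteDimensional.of_denseRange {B : Type} [NonUnitalCStarAlgebra B]
    (hA : IrredRepsFiniteDimensional A) (φ : A →⋆ₙₐ[ℂ] B) (hφ : DenseRange φ) :
    IrredRepsFiniteDimensional B := fun H _ _ _ ρ hρ => by
  refine hA H (ρ.comp φ) ⟨fun h => hρ.1 ?_, fun S hS hinv => hρ.2 S hS fun b x hx => ?_⟩
  · refine DFunLike.coe_injective (hφ.equalizer (continuous_rep ρ) continuous_const ?_)
    exact funext fun a => congr($h a)
  · refine hφ.induction_on (p := fun b => ρ b x ∈ S) b ?_ fun a => hinv a x hx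
    exact hS.preimage ((continuous_rep ρ).clm_apply continuous_const)

/-- The compression `a ↦ π a * e` of a representation `π` to a projection `e` of its commutant,
acting on the original space. -/
noncomputable def compression (π : A →⋆ₙₐ[ℂ] (H →L[ℂ] H)) {e : H →L[ℂ] H}
    (he : IsStarProjection e) (heN : e ∈ commutant π) : A →⋆ₙₐ[ℂ] (H →L[ℂ] H) where
  toFun a := π a * e
  map_smul' c a := by simp
  map_zero' := by simp
  map_add' a b := by simp [add_mul]
  map_mul' a b := by
    rw [map_mul, mul_assoc (π a) e, ← mul_assoc e, commute_of_mem_commutant heN b,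
      mul_assoc (π b), he.isIdempotentElem.eq, mul_assoc]
  map_star' a := by
    rw [star_mul, he.isSelfAdjoint.star_eq, ← map_star, commute_of_mem_commutant heN]

variable {π : A →⋆ₙₐ[ℂ] (H →L[ℂ] H)} {e : H →L[ℂ] H} {ξ : H}

theorem commute_of_mem_starAlgebra_adjoin {s : Set (H →L[ℂ] H)} (hs : ∀ c ∈ s, star c ∈ s)
    {T : H →L[ℂ] H} (hT : ∀ c ∈ s, Commute T c) : ∀ c ∈ StarAlgebra.adjoin ℂ s, Commute T c := by
  have hle : StarAlgebra.adjoin ℂ s ≤ StarSubalgebra.centralizer ℂ {T} :=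
    StarAlgebra.adjoin_le fun c hc => by
      rw [SetLike.mem_coe, StarSubalgebra.mem_centralizer_iff]
      rintro _ rfl
      exact ⟨hT c hc, by simpa using (hT _ (hs c hc)).star_star.eq⟩
  exact fun c hc => ((StarSubalgebra.mem_centralizer_iff ℂ).1 (hle hc) T rfl).1

theorem exists_closed_subalgebra_of_compression (hξ : IsCyclicVector π ξ) (he : IsStarProjection e)
    (heN : e ∈ commutant π) (he0 : e ≠ 0) (heT : ∀ T ∈ commutant π, Commute T e) :
    ∃ (B : NonUnitalStarSubalgebra ℂ (H →L[ℂ] H)) (_ : IsClosed (B : Set (H →L[ℂ] H)))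
      (φ : A →⋆ₙₐ[ℂ] B), DenseRange φ ∧ Nontrivial B ∧ (∀ a, (φ a : H →L[ℂ] H) = π a * e) ∧
      (∀ b : B, e * b = b) ∧ ∀ T ∈ commutant π, ∀ b : B, Commute T b := by
  let σ := compression π he heN
  let B := (NonUnitalStarAlgHom.range σ).topologicalClosure
  have hB : IsClosed (B : Set (H →L[ℂ] H)) := NonUnitalStarSubalgebra.isClosed_topologicalClosure _
  let φ : A →⋆ₙₐ[ℂ] B := NonUnitalStarAlgHom.codRestrict σ B fun a =>
    NonUnitalStarSubalgebra.le_topologicalClosure _ ⟨a, rfl⟩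
  have hφ : DenseRange φ := by
    refine IsInducing.subtypeVal.dense_iff.2 fun b => ?_
    rw [← Set.range_comp]
    exact b.2
  have hσ : ∀ a, (φ a : H →L[ℂ] H) = π a * e := fun _ => rfl
  have hBnt : Nontrivial B := by
    by_contra h
    have := not_nontrivial_iff_subsingleton.1 h
    refine he0 (ContinuousLinearMap.ext fun x => hξ.eq_zero_of_forall_rep_eq_zero fun a => ?_)
    change (π a * e) x = 0
    rw [← hσ, Subsingleton.elim (φ a) 0]
    rfl
  refine ⟨B, hB, φ, hφ, hBnt, hσ, fun b => ?_, fun T hT b => ?_⟩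
  · refine hφ.induction_on (p := fun b : B => e * (b : H →L[ℂ] H) = b) b
      (isClosed_eq (by fun_prop) (by fun_prop)) fun a => ?_
    rw [hσ, ← mul_assoc, commute_of_mem_commutant heN, mul_assoc, he.isIdempotentElem.eq]
  · refine hφ.induction_on (p := fun b : B => T * (b : H →L[ℂ] H) = b * T) b
      (isClosed_eq (by fun_prop) (by fun_prop)) fun a => ?_
    rw [hσ]
    exact (commute_of_mem_commutant hT a).mul_right (heT T hT)

theorem IrredRepsFiniteDimensional.exists_commutative_finite (hA : IrredRepsFiniteDimensional A)
    (hξ : IsCyclicVector π ξ) (he : IsStarProjection e) (heN : e ∈ commutant π) (he0 : e ≠ 0)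
    (heT : ∀ T ∈ commutant π, Commute T e) :
    ∃ (C : StarSubalgebra ℂ (H →L[ℂ] H)) (d : H →L[ℂ] H) (s : Finset H),
      (∀ a ∈ C, ∀ b ∈ C, Commute a b) ∧ (∀ c ∈ C, ∀ T ∈ commutant π, Commute T c) ∧ d ≠ 0 ∧
      e * d = d ∧ (∀ T ∈ commutant π, Commute T d) ∧
      ∀ Q : H →L[ℂ] H, (∀ c ∈ C, Commute Q c) → (∀ x ∈ s, Q x = x) → Q * d = d := by
  classical
  obtain ⟨B, _, φ, hφ, _, hφe, heB, hTB⟩ :=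
    exists_closed_subalgebra_of_compression hξ he heN he0 heT
  obtain ⟨R, d, s, hcomm, hR, hdR, hd0, hsR, hd⟩ :=
    (hA.of_denseRange φ hφ).exists_eq_sum_mul_star_mul
      (σ := NonUnitalStarSubalgebraClass.subtype B) Subtype.val_injective
  let RR : Set (H →L[ℂ] H) := {c | ∃ u ∈ R, ∃ v ∈ R, c = u * star v}
  have hstar : ∀ c ∈ RR, star c ∈ RR := by
    rintro _ ⟨u, hu, v, hv, rfl⟩
    exact ⟨v, hv, u, hu, by simp⟩
  refine ⟨StarAlgebra.adjoin ℂ RR, d, s.image fun v : B => v.1 ξ, ?_, ?_, by simpa using hd0,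
    heB d, fun T hT => hTB T hT d, fun Q hQC hQ => ?_⟩
  · refine fun a ha => commute_of_mem_starAlgebra_adjoin hstar fun c hc => Commute.symm <|
      commute_of_mem_starAlgebra_adjoin hstar (fun c' hc' => ?_) a ha
    obtain ⟨u, hu, v, hv, rfl⟩ := hc
    obtain ⟨u', hu', v', hv', rfl⟩ := hc'
    have h := congrArg Subtype.val (hcomm u hu v hv u' hu' v' hv').eq
    simpa only [MulMemClass.coe_mul, StarMemClass.coe_star, commute_iff_eq] using h
  · intro c hc T hT
    refine commute_of_mem_starAlgebra_adjoin hstar (fun c' hc' => ?_) c hc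
    obtain ⟨u, -, v, -, rfl⟩ := hc'
    exact hTB T hT (u * star v)
  · have hde : (d : H →L[ℂ] H) * e = d := ((hTB e heN d).symm.eq).trans (heB d)
    have hsum : ∀ a, d.1 (π a ξ) = ∑ v ∈ s, ((d * φ a).1 * star v.1) (v.1 ξ) := fun a => by
      have h : d.1 * (π a * e) = ∑ v ∈ s, (d * φ a).1 * star v.1 * v.1 := by
        simpa [hφe] using congrArg Subtype.val (hd (φ a))
      rw [← commute_of_mem_commutant heN, ← mul_assoc, hde] at h
      simpa using congr($h ξ)
    have hQs : ∀ a, ∀ v ∈ s, Q (((d * φ a).1 * star v.1) (v.1 ξ)) =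
        ((d * φ a).1 * star v.1) (v.1 ξ) := fun a v hv => by
      have hc : Commute Q ((d * φ a).1 * star v.1) := hQC _ <|
        StarAlgebra.subset_adjoin ℂ RR ⟨d * φ a, hR d hdR (φ a), v, hsR v hv, rfl⟩
      refine congr($hc (v.1 ξ)).trans (congrArg ((d * φ a).1 * star v.1) ?_)
      exact hQ _ (Finset.mem_image_of_mem _ hv)
    refine coeFn_injective <| hξ.equalizer (Q * d).continuous d.1.continuous <| funext fun a => ?_
    change Q (d.1 (π a ξ)) = d.1 (π a ξ)
    rw [hsum, map_sum]
    exact Finset.sum_congr rfl (hQs a)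

end Compression

section Finiteness
variable {A H : Type} [NonUnitalCStarAlgebra A]
  [NormedAddCommGroup H] [InnerProductSpace ℂ H] [CompleteSpace H]

/-- A bounded sequence in the commutant of `π` whose adjoints tend strongly to `0`. -/
structure IsAdjointNull (π : A →⋆ₙₐ[ℂ] (H →L[ℂ] H)) (T : ℕ → H →L[ℂ] H) : Prop where
  mem_commutant : ∀ k, T k ∈ commutant π
  bounded : ∃ M, ∀ k, ‖T k‖ ≤ M
  tendsto_adjoint : ∀ x, Tendsto (fun k => adjoint (T k) x) atTop (𝓝 0)

/-- The vectors annihilated in the limit by every `IsAdjointNull` sequence. Finiteness of the von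
Neumann algebra `commutant π` amounts to this being the whole space. -/
def finitePart (π : A →⋆ₙₐ[ℂ] (H →L[ℂ] H)) : Submodule ℂ H :=
  ⨅ (T : ℕ → H →L[ℂ] H) (_ : IsAdjointNull π T), nullSubspace atTop T

variable {π : A →⋆ₙₐ[ℂ] (H →L[ℂ] H)}

theorem mem_finitePart {x : H} : x ∈ finitePart π ↔
    ∀ T, IsAdjointNull π T → Tendsto (fun k => T k x) atTop (𝓝 0) := by
  simp only [finitePart, Submodule.mem_iInf, mem_nullSubspace]

theorem IsAdjointNull.mul_right {T : ℕ → H →L[ℂ] H} (hT : IsAdjointNull π T) {S : H →L[ℂ] H}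
    (hS : S ∈ commutant π) : IsAdjointNull π fun k => T k * S where
  mem_commutant k := mul_mem (hT.mem_commutant k) hS
  bounded := by
    obtain ⟨M, hM⟩ := hT.bounded
    exact ⟨M * ‖S‖, fun k => (norm_mul_le _ _).trans (by gcongr; exact hM k)⟩
  tendsto_adjoint x := by
    have h := ((adjoint S).continuous.tendsto 0).comp (hT.tendsto_adjoint x)
    rw [map_zero] at h
    refine h.congr fun k => ?_
    rw [← star_eq_adjoint (T k * S), star_mul]
    rfl

theorem isClosedInvariant_finitePart : IsClosedInvariant π (finitePart π) where
  isClosed := by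
    simp only [finitePart, Submodule.coe_iInf]
    exact isClosed_iInter fun T => isClosed_iInter fun hT =>
      isClosed_nullSubspace hT.bounded.choose_spec
  rep_mem a x hx := mem_finitePart.2 fun T hT => by
    have h := ((π a).continuous.tendsto 0).comp (mem_finitePart.1 hx T hT)
    rw [map_zero] at h
    exact h.congr fun k => (mem_commutant.1 (hT.mem_commutant k) a x).symm

theorem map_mem_finitePart {S : H →L[ℂ] H} (hS : S ∈ commutant π) {x : H}
    (hx : x ∈ finitePart π) : S x ∈ finitePart π :=
  mem_finitePart.2 fun _ hT => mem_finitePart.1 hx _ (hT.mul_right hS)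

theorem IrredRepsFiniteDimensional.finitePart_eq_top (hA : IrredRepsFiniteDimensional A) {ξ : H}
    (hξ : IsCyclicVector π ξ) : finitePart π = ⊤ := by
  have hZ := isClosedInvariant_finitePart (π := π)
  have := hZ.hasOrthogonalProjection
  have := hZ.orthogonal.hasOrthogonalProjection
  set e := (finitePart π)ᗮ.starProjection with he
  by_contra hne
  have he0 : e ≠ 0 := by
    intro h
    rw [← Submodule.orthogonal_eq_bot_iff, ← (finitePart π)ᗮ.range_starProjection, ← he, h] at hne
    exact hne LinearMap.range_zero
  have hTZ : ∀ T ∈ commutant π, ∀ x ∈ (finitePart π)ᗮ, T x ∈ (finitePart π)ᗮ :=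
    fun T hT x hx y hy => by
      rw [← adjoint_inner_left]
      exact hx _ (map_mem_finitePart (star_mem hT) hy)
  have heT : ∀ T ∈ commutant π, Commute T e := fun T hT =>
    (commute_starProjection_of_invariant (hTZ T hT) (hTZ _ (star_mem hT))).symm
  obtain ⟨C, d, s, hC, hTC, hd0, hed, hTd, hQd⟩ := hA.exists_commutative_finite hξ
    isStarProjection_starProjection hZ.orthogonal.starProjection_mem_commutant he0 heT
  have hmem : ∀ y, d y ∈ finitePart π := fun y => mem_finitePart.2 fun T hT => by
    obtain ⟨M, hM⟩ := hT.bounded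
    obtain ⟨Q, hQC, hQs, hQ⟩ := exists_fixing_nullSubspace_eq_top hC
      (fun k c hc => hTC c hc _ (hT.mem_commutant k)) hM
      (Submodule.eq_top_iff'.2 hT.tendsto_adjoint) s
    refine Tendsto.congr (fun k => ?_) (Submodule.eq_top_iff'.1 hQ (d y))
    change Q (T k (d y)) = T k (d y)
    rw [show T k (d y) = d (T k y) from congr($(hTd _ (hT.mem_commutant k)) y)]
    exact congr($(hQd Q hQC hQs) (T k y))
  refine hd0 (ContinuousLinearMap.ext fun y => (inner_self_eq_zero (𝕜 := ℂ)).1 ?_)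
  have hdy : d y ∈ (finitePart π)ᗮ := by
    rw [← hed]
    exact Submodule.starProjection_apply_mem _ (d y)
  exact hdy _ (hmem y)

end Finiteness

section FunctionalCalculus
variable {H : Type*} [NormedAddCommGroup H] [InnerProductSpace ℂ H] [CompleteSpace H]

theorem orthogonal_ker_le {B : H →L[ℂ] H} (hB : IsSelfAdjoint B) {S : Submodule ℂ H}
    (hS : IsClosed (S : Set H)) (h : ∀ x, B x ∈ S) : B.kerᗮ ≤ S := by
  rw [B.orthogonal_ker, ← star_eq_adjoint, hB.star_eq]
  exact Submodule.topologicalClosure_minimal _ (by rintro _ ⟨x, rfl⟩; exact h x) hS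

theorem exists_cfc_truncation {B : H →L[ℂ] H} (hB : 0 ≤ B) {t : ℝ} (ht : 0 < t) :
    ∃ f : ℝ → ℝ, ‖cfc f B‖ ≤ 1 ∧ (1 - cfc f B) * B = t • ((1 - cfc f B) * cfc f B) ∧
      t • (cfc f B * cfc f B) ≤ B := by
  have hsa := hB.isSelfAdjoint
  have hspec : ∀ s ∈ spectrum ℝ B, 0 ≤ s := fun s hs => spectrum_nonneg_of_nonneg hB hs
  have hcont : ContinuousOn (fun s : ℝ => min (s / t) 1) (spectrum ℝ B) := by fun_prop
  refine ⟨fun s => min (s / t) 1, norm_cfc_le zero_le_one fun s hs => ?_, ?_, ?_⟩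
  · rw [Real.norm_of_nonneg (le_min (div_nonneg (hspec s hs) ht.le) zero_le_one)]
    exact min_le_right _ _
  · nth_rw 2 [← cfc_id' ℝ B]
    rw [← cfc_one ℝ B, ← cfc_sub .., ← cfc_mul .., ← cfc_mul .., ← cfc_smul ..]
    refine cfc_congr fun s _ => ?_
    rcases le_total s t with h | h
    · have : s / t ≤ 1 := (div_le_one ht).2 h
      simp [this]
      field_simp
    · have : 1 ≤ s / t := (one_le_div ht).2 h
      simp [this]
  · nth_rw 3 [← cfc_id' ℝ B]
    rw [← cfc_mul .., ← cfc_smul ..]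
    refine cfc_mono fun s hs => ?_
    have h0 := le_min (div_nonneg (hspec s hs) ht.le) zero_le_one
    calc t * (min (s / t) 1 * min (s / t) 1) ≤ t * (s / t * 1) :=
          mul_le_mul_of_nonneg_left (mul_le_mul (min_le_left _ _) (min_le_right _ _) h0
            (div_nonneg (hspec s hs) ht.le)) ht.le
      _ = s := by field_simp

theorem exists_cfc_mul_mul {M : H →L[ℂ] H} (hM : 0 ≤ M) {ε : ℝ} (hε : 0 < ε) :
    ∃ f : ℝ → ℝ, 0 ≤ 1 - cfc f M * M * cfc f M ∧ ‖1 - cfc f M * M * cfc f M‖ ≤ 1 ∧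
      ‖(1 - cfc f M * M * cfc f M) * M‖ ≤ ε := by
  have hsa := hM.isSelfAdjoint
  have hspec : ∀ s ∈ spectrum ℝ M, 0 ≤ s := fun s hs => spectrum_nonneg_of_nonneg hM hs
  obtain ⟨f, hcont, hf⟩ : ∃ f : ℝ → ℝ, Continuous f ∧
      ∀ s, 0 ≤ s → 1 - f s * s * f s = ε / (s + ε) := by
    refine ⟨fun s => (√(max s 0 + ε))⁻¹, .inv₀ (by fun_prop) fun s => by positivity,
      fun s hs => ?_⟩
    simp only [max_eq_left hs]
    rw [mul_right_comm, ← mul_inv, Real.mul_self_sqrt (add_nonneg hs hε.le)]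
    field_simp
    ring
  have hcont' : ContinuousOn (fun s => ε / (s + ε)) (spectrum ℝ M) :=
    ContinuousOn.div (by fun_prop) (by fun_prop) fun s hs => by have := hspec s hs; positivity
  have hfM : 1 - cfc f M * M * cfc f M = cfc (fun s => ε / (s + ε)) M := by
    have hfc := hcont.continuousOn (s := spectrum ℝ M)
    nth_rw 2 [← cfc_id' ℝ M]
    rw [← cfc_one ℝ M, ← cfc_mul .., ← cfc_mul .., ← cfc_sub ..]
    exact cfc_congr fun s hs => hf s (hspec s hs)
  refine ⟨f, ?_⟩
  rw [hfM]
  refine ⟨cfc_nonneg fun s hs => ?_, norm_cfc_le zero_le_one fun s hs => ?_, ?_⟩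
  · have := hspec s hs
    positivity
  · have := hspec s hs
    rw [Real.norm_of_nonneg (by positivity)]
    exact div_le_one_of_le₀ (by linarith) (by positivity)
  · nth_rw 2 [← cfc_id' ℝ M]
    rw [← cfc_mul ..]
    refine norm_cfc_le hε.le fun s hs => ?_
    have := hspec s hs
    rw [Real.norm_of_nonneg (by positivity), div_mul_eq_mul_div]
    exact div_le_of_le_mul₀ (by positivity) hε.le (by nlinarith)

theorem exists_norm_mul_cfc_le_one {R : H →L[ℂ] H} {x : H} (hx : x ∈ R.kerᗮ) (hx0 : x ≠ 0) :
    ∃ f : ℝ → ℝ, ‖R * cfc f (star R * R)‖ ≤ 1 ∧ ‖x‖ ≤ 2 * ‖R (cfc f (star R * R) x)‖ := by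
  set M := star R * R with hM
  have hM0 : 0 ≤ M := star_mul_self_nonneg R
  choose f hf0 hf1 hfM using fun k : ℕ => exists_cfc_mul_mul hM0 (Nat.one_div_pos_of_nat (n := k))
  set D : ℕ → H →L[ℂ] H := fun k => 1 - cfc (f k) M * M * cfc (f k) M with hD
  have hnorm : ∀ k y, ‖R (cfc (f k) M y)‖ ^ 2 = ‖y‖ ^ 2 - RCLike.re ⟪y, D k y⟫_ℂ := fun k y => by
    have hsq : star (R * cfc (f k) M) * (R * cfc (f k) M) = 1 - D k := by
      rw [star_mul, (cfc_predicate (f k) M).star_eq, hD, sub_sub_cancel, hM]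
      simp only [mul_assoc]
    have h := (R * cfc (f k) M).apply_norm_sq_eq_inner_adjoint_right y
    rw [← star_eq_adjoint] at h
    rw [← inner_self_eq_norm_sq (𝕜 := ℂ) y, ← map_sub, ← inner_sub_right]
    exact h.trans congr(RCLike.re ⟪y, $hsq y⟫_ℂ)
  have hlim : Tendsto (fun k => D k x) atTop (𝓝 0) := by
    rw [← R.ker_adjoint_comp_self] at hx
    refine orthogonal_ker_le hM0.isSelfAdjoint (isClosed_nullSubspace hf1) (fun y => ?_) hx
    have hbound := (tendsto_one_div_add_atTop_nhds_zero_nat (𝕜 := ℝ)).mul_const ‖y‖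
    rw [zero_mul] at hbound
    exact squeeze_zero_norm (fun k => ((D k * M).le_opNorm y).trans (by gcongr; exact hfM k)) hbound
  have hre : Tendsto (fun k => RCLike.re ⟪x, D k x⟫_ℂ) atTop (𝓝 0) := by
    simpa [Function.comp_def] using (Complex.continuous_re.tendsto _).comp
      ((tendsto_const_nhds (x := x)).inner (𝕜 := ℂ) hlim)
  have hx1 : 0 < ‖x‖ ^ 2 / 2 := by positivity
  obtain ⟨k, hk⟩ := (hre.eventually_lt_const hx1).exists
  refine ⟨f k, opNorm_le_bound _ zero_le_one fun y => ?_, ?_⟩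
  · have h := ((nonneg_iff_isPositive _).1 (hf0 k)).re_inner_nonneg_right y
    rw [one_mul, ← abs_norm, ← abs_norm y]
    exact sq_le_sq.1 ((hnorm k y).trans_le (sub_le_self _ h))
  · rw [← abs_norm, ← abs_of_nonneg (by positivity : 0 ≤ 2 * ‖_‖)]
    refine sq_le_sq.1 ?_
    rw [mul_pow, hnorm]
    linarith [sq_nonneg ‖x‖]

end FunctionalCalculus

section SpectralCut

theorem smul_le_of_mul_eq_self {M : Type*} [CStarAlgebra M] [PartialOrder M] [StarOrderedRing M]
    {B Y p : M} {t : ℝ} (ht : 0 ≤ t) (hY : IsSelfAdjoint Y) (hYB : t • (Y * Y) ≤ B)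
    (hp : IsStarProjection p) (hYp : Y * p = p) : t • p ≤ B := by
  have hpY : p * Y = p := by
    rw [← hY.star_eq, ← hp.isSelfAdjoint.star_eq, ← star_mul, hYp]
  calc t • p = t • (star Y * p * Y) := by rw [hY.star_eq, hYp, hpY]
    _ ≤ t • (star Y * 1 * Y) :=
        smul_le_smul_of_nonneg_left (star_left_conjugate_le_conjugate hp.le_one Y) ht
    _ = t • (Y * Y) := by rw [mul_one, hY.star_eq]
    _ ≤ B := hYB

variable {A H : Type} [NonUnitalCStarAlgebra A]
  [NormedAddCommGroup H] [InnerProductSpace ℂ H] [CompleteSpace H]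
  {π : A →⋆ₙₐ[ℂ] (H →L[ℂ] H)} {B e : H →L[ℂ] H}

theorem exists_isStarProjection_of_fixed {S T : H →L[ℂ] H} (hS : S ∈ commutant π)
    (hT : T ∈ commutant π) {y : H} (hy : y ≠ 0) (hSy : S y = y) (hTy : T y = y) :
    ∃ p ∈ commutant π, IsStarProjection p ∧ p ≠ 0 ∧ S * p = p ∧ T * p = p := by
  have hfix : ∀ {R : H →L[ℂ] H} {x : H}, x ∈ (1 - R).ker ↔ R x = x := fun {R x} => by
    rw [LinearMap.mem_ker, eq_comm (a := R x)]
    exact sub_eq_zero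
  have hE := (isClosedInvariant_ker (sub_mem (one_mem _) hS)).inf
    (isClosedInvariant_ker (sub_mem (one_mem _) hT))
  have := hE.hasOrthogonalProjection
  set E : Submodule ℂ H := (1 - S).ker ⊓ (1 - T).ker
  have hEp : ∀ x, E.starProjection x ∈ E := E.starProjection_apply_mem
  refine ⟨E.starProjection, hE.starProjection_mem_commutant, isStarProjection_starProjection,
    fun h => hy ?_, ContinuousLinearMap.ext fun x => hfix.1 (hEp x).1,
    ContinuousLinearMap.ext fun x => hfix.1 (hEp x).2⟩
  have hyE : y ∈ E := ⟨hfix.2 hSy, hfix.2 hTy⟩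
  rw [← Submodule.starProjection_eq_self_iff.2 hyE, h, zero_apply]

theorem isAdjointNull_mul_mul (hB : B ∈ commutant π) (hB' : IsSelfAdjoint B)
    (he : e ∈ commutant π) (he' : IsSelfAdjoint e) (hBe : ∀ y ∈ B.ker, e y = 0)
    {f : ℕ → ℝ → ℝ} {W : ℕ → H →L[ℂ] H} {t : ℕ → ℝ} (ht : Tendsto t atTop (𝓝 0))
    (hf : ∀ k, ‖cfc (f k) B‖ ≤ 1)
    (hfB : ∀ k, (1 - cfc (f k) B) * B = t k • ((1 - cfc (f k) B) * cfc (f k) B))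
    (hW : ∀ k, W k ∈ commutant π) (hbd : ∀ k, ‖(1 - cfc (f k) B) * e * W k‖ ≤ 1) :
    IsAdjointNull π fun k => (1 - cfc (f k) B) * e * W k := by
  set T : ℕ → H →L[ℂ] H := fun k => (1 - cfc (f k) B) * e * W k with hT
  have hadj : ∀ k, adjoint (T k) = star (W k) * e * (1 - cfc (f k) B) := fun k => by
    rw [← star_eq_adjoint, hT, star_mul, star_mul, he'.star_eq, star_sub, star_one,
      (cfc_predicate (f k) B).star_eq, mul_assoc]
  have hbd' : ∀ k, ‖adjoint (T k)‖ ≤ 1 := fun k => (norm_star (T k)).trans_le (hbd k)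
  refine ⟨fun k => mul_mem (mul_mem (sub_mem (one_mem _) (cfc_mem_commutant hB hB' _)) he) (hW k),
    ⟨1, hbd⟩, (Submodule.eq_top_iff' (p := nullSubspace atTop fun k => adjoint (T k))).1 ?_⟩
  have := (isClosedInvariant_ker hB).hasOrthogonalProjection
  rw [eq_top_iff, ← Submodule.sup_orthogonal_of_hasOrthogonalProjection (K := B.ker)]
  refine sup_le (fun y hy => ?_) (orthogonal_ker_le hB' (isClosed_nullSubspace hbd') fun z => ?_)
  · have hzero : ∀ k, adjoint (T k) y = 0 := fun k => by
      have hcomm : B * (1 - cfc (f k) B) = (1 - cfc (f k) B) * B :=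
        (Commute.one_right B).sub_right (hB'.commute_cfc (.refl B) _).symm
      have hmem : (1 - cfc (f k) B) y ∈ B.ker :=
        congr($hcomm y).trans ((congrArg ⇑(1 - cfc (f k) B) hy).trans (map_zero _))
      rw [hadj]
      exact (congrArg ⇑(star (W k)) (hBe _ hmem)).trans (map_zero _)
    exact tendsto_const_nhds.congr fun k => (hzero k).symm
  · refine squeeze_zero_norm (a := fun k => ‖t k‖ * ‖z‖) (fun k => ?_)
      (by simpa using ht.norm.mul_const ‖z‖)
    have hTB : adjoint (T k) * B = t k • (adjoint (T k) * cfc (f k) B) := by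
      rw [hadj, mul_assoc _ _ B, hfB, mul_smul_comm, mul_assoc _ (1 - _)]
    calc ‖adjoint (T k) (B z)‖ = ‖(t k • (adjoint (T k) * cfc (f k) B)) z‖ := by
          rw [← hTB]; rfl
      _ ≤ ‖t k • (adjoint (T k) * cfc (f k) B)‖ * ‖z‖ := le_opNorm _ _
      _ ≤ ‖t k‖ * (1 * 1) * ‖z‖ := by
          rw [norm_smul]
          gcongr
          exact (norm_mul_le _ _).trans (by gcongr; exacts [hbd' k, hf k])
      _ = ‖t k‖ * ‖z‖ := by ring

theorem exists_isStarProjection_smul_le (hfin : finitePart π = ⊤) (hB : B ∈ commutant π)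
    (hB0 : 0 ≤ B) (he : e ∈ commutant π) (he' : IsStarProjection e) (he0 : e ≠ 0)
    (hBe : ∀ y ∈ B.ker, e y = 0) :
    ∃ t : ℝ, 0 < t ∧ ∃ p ∈ commutant π, IsStarProjection p ∧ p ≠ 0 ∧ e * p = p ∧ t • p ≤ B := by
  choose f hf1 hfB hfle using fun k : ℕ =>
    exists_cfc_truncation hB0 (Nat.one_div_pos_of_nat (n := k))
  have hYc : ∀ k, cfc (f k) B ∈ commutant π := fun k => cfc_mem_commutant hB hB0.isSelfAdjoint _
  by_cases hcut : ∃ k, ∃ y ≠ 0, e y = y ∧ cfc (f k) B y = y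
  · obtain ⟨k, y, hy0, hey, hYy⟩ := hcut
    obtain ⟨p, hp, hp', hp0, hep, hYp⟩ := exists_isStarProjection_of_fixed he (hYc k) hy0 hey hYy
    exact ⟨_, Nat.one_div_pos_of_nat, p, hp, hp', hp0, hep,
      smul_le_of_mul_eq_self Nat.one_div_pos_of_nat.le (cfc_predicate _ _) (hfle k) hp' hYp⟩
  push Not at hcut
  set R : ℕ → H →L[ℂ] H := fun k => (1 - cfc (f k) B) * e
  have hRc : ∀ k, R k ∈ commutant π := fun k => mul_mem (sub_mem (one_mem _) (hYc k)) he
  have hee : ∀ y, e (e y) = e y := fun y => congr($he'.isIdempotentElem.eq y)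
  obtain ⟨z, hz⟩ : ∃ z, e z ≠ 0 := by
    contrapose! he0
    exact ContinuousLinearMap.ext he0
  have hker : ∀ k, e z ∈ (R k).kerᗮ := fun k u hu => by
    have heu : e u = 0 := by
      by_contra h
      exact hcut k (e u) h (hee u) (sub_eq_zero.1 hu).symm
    rw [← he'.isSelfAdjoint.star_eq, star_eq_adjoint, adjoint_inner_right, heu, inner_zero_left]
  choose g hg1 hg2 using fun k => exists_norm_mul_cfc_le_one (hker k) hz
  have hnull := isAdjointNull_mul_mul hB hB0.isSelfAdjoint he he'.isSelfAdjoint hBe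
    tendsto_one_div_add_atTop_nhds_zero_nat hf1 hfB (fun k => cfc_mem_commutant
      (mul_mem (star_mem (hRc k)) (hRc k)) (.star_mul_self _) (g k)) hg1
  have hlim := mem_finitePart.1 (Submodule.eq_top_iff'.1 hfin (e z)) _ hnull
  have hlim' := hlim.norm.const_mul 2
  rw [norm_zero, mul_zero] at hlim'
  exact absurd (norm_le_zero_iff.1 (ge_of_tendsto' hlim' hg2)) hz

end SpectralCut

section Singular
variable {A H : Type} [NonUnitalCStarAlgebra A]
  [NormedAddCommGroup H] [InnerProductSpace ℂ H] [CompleteSpace H]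
  {π : A →⋆ₙₐ[ℂ] (H →L[ℂ] H)} {ξ : H} {S B : H →L[ℂ] H}

theorem SingularC.eq_zero_of_commutant (hξ : IsCyclicVector π ξ) (hS : S ∈ commutant π)
    (hB : B ∈ commutant π) (hsing : SingularC (matrixCoeff π (S ξ) ξ) (matrixCoeff π (B ξ) ξ))
    {T : H →L[ℂ] H} (hT : T ∈ commutant π) (hT0 : 0 ≤ T) (hTS : T ≤ S) (hTB : T ≤ B) : T = 0 := by
  refine commutant_eq_of_matrixCoeff_eq hξ hT (zero_mem _) ?_
  rw [hsing _ ((isPosFnC_matrixCoeff_iff hξ hT).2 hT0) ((fnLEC_matrixCoeff_iff hξ hT hS).2 hTS)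
    ((fnLEC_matrixCoeff_iff hξ hT hB).2 hTB)]
  ext a
  simp [matrixCoeff_apply]

theorem SingularC.orthogonal_ker_sup_ker_eq_bot (hfin : finitePart π = ⊤) (hξ : IsCyclicVector π ξ)
    (hS : S ∈ commutant π) (hS0 : 0 ≤ S) (hB : B ∈ commutant π) (hB0 : 0 ≤ B)
    (hsing : SingularC (matrixCoeff π (S ξ) ξ) (matrixCoeff π (B ξ) ξ)) :
    (S.ker ⊔ B.ker)ᗮ = ⊥ := by
  have hE := (isClosedInvariant_ker hS).orthogonal.inf (isClosedInvariant_ker hB).orthogonal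
  rw [Submodule.inf_orthogonal] at hE
  have := hE.hasOrthogonalProjection
  set E := (S.ker ⊔ B.ker)ᗮ
  have hkill : ∀ y ∈ S.ker ⊔ B.ker, E.starProjection y = 0 := fun y hy =>
    E.starProjection_apply_eq_zero_iff.2 (Submodule.le_orthogonal_orthogonal _ hy)
  by_contra hne
  have he0 : E.starProjection ≠ 0 := fun h => hne (by
    rw [← E.range_starProjection, h]; exact LinearMap.range_zero)
  obtain ⟨t, ht, p, hp, hp', hp0, hep, hpB⟩ := exists_isStarProjection_smul_le hfin hB hB0
    hE.starProjection_mem_commutant isStarProjection_starProjection he0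
    fun y hy => hkill y (Submodule.mem_sup_right hy)
  have hpe : p * E.starProjection = p := by
    rw [← hp'.isSelfAdjoint.star_eq, ← isSelfAdjoint_starProjection E |>.star_eq, ← star_mul, hep]
  obtain ⟨s, hs, q, hq, hq', hq0, hpq, hqS⟩ :=
    exists_isStarProjection_smul_le hfin hS hS0 hp hp' hp0 fun y hy => by
      rw [← hpe]
      exact (congrArg p (hkill y (Submodule.mem_sup_left hy))).trans (map_zero p)
  have hqp : q ≤ p := (hq'.le_iff_mul_eq_right hp').2 hpq
  have hzero : min s t • q = 0 := by
    refine SingularC.eq_zero_of_commutant hξ hS hB hsing ?_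
      (smul_nonneg (by positivity) hq'.nonneg) ?_ ?_
    · rw [← Complex.coe_smul]
      exact (commutant π).smul_mem hq _
    · exact (smul_le_smul_of_nonneg_right (min_le_left _ _) hq'.nonneg).trans hqS
    · calc min s t • q ≤ t • q := smul_le_smul_of_nonneg_right (min_le_right _ _) hq'.nonneg
        _ ≤ t • p := smul_le_smul_of_nonneg_left hqp ht.le
        _ ≤ B := hpB
  exact hq0 ((smul_eq_zero.1 hzero).resolve_left (lt_min hs ht).ne')

end Singular

section Uniqueness

section Hilbert
variable {H : Type*} [NormedAddCommGroup H] [InnerProductSpace ℂ H] [CompleteSpace H]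

theorem norm_apply_sq_le_of_nonneg {T : H →L[ℂ] H} (hT : 0 ≤ T) (x : H) :
    ‖T x‖ ^ 2 ≤ ‖T‖ * RCLike.re ⟪T x, x⟫_ℂ := by
  obtain ⟨s, rfl⟩ := CStarAlgebra.nonneg_iff_eq_star_mul_self.1 hT
  have hsx : ‖s x‖ ^ 2 = RCLike.re ⟪(star s * s) x, x⟫_ℂ := s.apply_norm_sq_eq_inner_adjoint_left x
  calc ‖star s (s x)‖ ^ 2 ≤ (‖star s‖ * ‖s x‖) ^ 2 := by gcongr; exact le_opNorm _ _
    _ = _ := by rw [mul_pow, hsx, norm_star, sq, ← CStarRing.norm_star_mul_self]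

theorem ker_le_ker_of_le_smul {T B : H →L[ℂ] H} (hT : 0 ≤ T) {r : ℝ} (hTB : T ≤ r • B) :
    B.ker ≤ T.ker := fun u hu => by
  have hle := ((nonneg_iff_isPositive _).1 (sub_nonneg.2 hTB)).re_inner_nonneg_left u
  rw [_root_.sub_apply, smul_apply, show B u = 0 from hu, smul_zero, zero_sub, inner_neg_left,
    map_neg] at hle
  have hsq := (norm_apply_sq_le_of_nonneg hT u).trans
    (mul_nonpos_of_nonneg_of_nonpos (norm_nonneg T) (neg_nonneg.1 hle))
  exact norm_eq_zero.1 (pow_eq_zero_iff two_ne_zero |>.1 (hsq.antisymm (sq_nonneg _)))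

theorem tendsto_apply_zero_of_inner {D : ℕ → H →L[ℂ] H} {M : ℝ} (hD : ∀ n, 0 ≤ D n)
    (hM : ∀ n, ‖D n‖ ≤ M) {x : H} (h : Tendsto (fun n => ⟪D n x, x⟫_ℂ) atTop (𝓝 0)) :
    Tendsto (fun n => D n x) atTop (𝓝 0) := by
  have hbound := (tendsto_zero_iff_norm_tendsto_zero.1 h).const_mul M
  rw [mul_zero] at hbound
  have hsq : Tendsto (fun n => ‖D n x‖ ^ 2) atTop (𝓝 0) :=
    squeeze_zero (fun n => sq_nonneg _) (fun n => (norm_apply_sq_le_of_nonneg (hD n) x).trans <|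
      mul_le_mul (hM n) (Complex.re_le_norm _)
        (((nonneg_iff_isPositive _).1 (hD n)).re_inner_nonneg_left x)
        ((norm_nonneg _).trans (hM n))) hbound
  refine tendsto_zero_iff_norm_tendsto_zero.2 ?_
  simpa [Function.comp_def, Real.sqrt_sq (norm_nonneg _)] using
    (Real.continuous_sqrt.tendsto 0).comp hsq

theorem eq_of_ker_le_ker_sub {S S' B : H →L[ℂ] H} (hS : IsSelfAdjoint S) (hS' : IsSelfAdjoint S')
    (h : (S.ker ⊔ B.ker)ᗮ = ⊥) (h' : (S'.ker ⊔ B.ker)ᗮ = ⊥) (hB : B.ker ≤ (S - S').ker) :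
    S = S' := by
  have hle : S.ker ⊔ B.ker ≤ (S - S').ker := by
    refine sup_le (fun z hz => ?_) hB
    have hmem : (S - S') z ∈ (S'.ker ⊔ B.ker)ᗮ := by
      rw [← Submodule.inf_orthogonal]
      refine ⟨fun y hy => ?_, fun y hy => ?_⟩
      · rw [_root_.sub_apply, show S z = 0 from hz, zero_sub, inner_neg_right, neg_eq_zero,
          ← adjoint_inner_left, ← star_eq_adjoint, hS'.star_eq, show S' y = 0 from hy,
          inner_zero_left]
      · rw [← adjoint_inner_left, ← star_eq_adjoint, (hS.sub hS').star_eq,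
          show (S - S') y = 0 from hB hy, inner_zero_left]
    rwa [h', Submodule.mem_bot] at hmem
  have htop : (S - S').ker = ⊤ := by
    have := (S - S').isClosed_ker.completeSpace_coe
    rw [← Submodule.orthogonal_eq_bot_iff, ← le_bot_iff, ← h]
    exact Submodule.orthogonal_le hle
  exact sub_eq_zero.1 (ContinuousLinearMap.ext (Submodule.eq_top_iff'.1 htop))

end Hilbert

variable {A H : Type} [NonUnitalCStarAlgebra A]
  [NormedAddCommGroup H] [InnerProductSpace ℂ H] [CompleteSpace H]
  {π : A →⋆ₙₐ[ℂ] (H →L[ℂ] H)} {ξ : H}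

theorem fnLEC_real_smul_matrixCoeff_iff (hξ : IsCyclicVector π ξ) {S T : H →L[ℂ] H}
    (hS : S ∈ commutant π) (hT : T ∈ commutant π) {r : ℝ} :
    FnLEC (matrixCoeff π (S ξ) ξ) ((r : ℂ) • matrixCoeff π (T ξ) ξ) ↔ S ≤ r • T := by
  have hr : (r : ℂ) • matrixCoeff π (T ξ) ξ = matrixCoeff π ((r • T) ξ) ξ := by
    rw [← Complex.coe_smul, smul_apply, matrixCoeff_smul_left, Complex.star_def,
      Complex.conj_ofReal]
  rw [hr, fnLEC_matrixCoeff_iff hξ hS]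
  rw [← Complex.coe_smul]
  exact (commutant π).smul_mem hT _

theorem AbsContC.ker_le (hξ : IsCyclicVector π ξ) {B C : H →L[ℂ] H} (hB : B ∈ commutant π)
    (hC : C ∈ commutant π) (h : AbsContC (matrixCoeff π (C ξ) ξ) (matrixCoeff π (B ξ) ξ)) :
    B.ker ≤ C.ker := by
  have hC0 : 0 ≤ C := (isPosFnC_matrixCoeff_iff hξ hC).1 h.isPosFnC
  obtain ⟨F, α, hF, -, hmono, hFB, hlim⟩ := h
  have hFC : ∀ n, FnLEC (F n) (matrixCoeff π (C ξ) ξ) := fun n => fnLEC_iff.2 fun a =>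
    (monotone_nat_of_le_succ fun k => fnLEC_iff.1 (hmono k) a).ge_of_tendsto (hlim _) n
  have hCnorm : FnLEC (matrixCoeff π (C ξ) ξ) ((‖C‖ : ℂ) • matrixCoeff π ξ ξ) := by
    refine (fnLEC_real_smul_matrixCoeff_iff hξ hC (one_mem _)).2 ?_
    rw [← Algebra.algebraMap_eq_smul_one]
    exact hC0.isSelfAdjoint.le_algebraMap_norm_self
  choose T hT hT0 hFT using fun n => exists_commutant_of_fnLEC hξ (hF n) (c := ‖C‖)
    (fnLEC_iff.2 fun a => (fnLEC_iff.1 (hFC n) a).trans (fnLEC_iff.1 hCnorm a))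
  simp only [hFT, fnLEC_matrixCoeff_iff hξ (hT _) hC,
    fnLEC_real_smul_matrixCoeff_iff hξ (hT _) hB] at hFC hFB
  have hD0 : ∀ n, 0 ≤ C - T n := fun n => sub_nonneg.2 (hFC n)
  have hbd : ∀ n, ‖C - T n‖ ≤ ‖C‖ := fun n =>
    CStarAlgebra.norm_le_norm_of_nonneg_of_le (hD0 n) (sub_le_self _ (hT0 n))
  have htop : ∀ x, Tendsto (fun n => (C - T n) x) atTop (𝓝 0) := fun x => by
    refine hξ.induction_on x (isClosed_nullSubspace hbd) fun a =>
      tendsto_apply_zero_of_inner hD0 hbd ?_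
    simp only [orbitMap_apply, _root_.sub_apply, inner_sub_left]
    simp only [← matrixCoeff_commutant_star_mul hC, ← matrixCoeff_commutant_star_mul (hT _), ← hFT]
    simpa using (hlim (star a * a)).const_sub (matrixCoeff π (C ξ) ξ (star a * a))
  intro u hu
  refine tendsto_nhds_unique (tendsto_const_nhds.congr fun n => ?_) (htop u)
  have hTu : T n u = 0 := ker_le_ker_of_le_smul (hT0 n) (hFB n) hu
  rw [_root_.sub_apply, hTu, sub_zero]
  rfl

theorem exists_commutant_of_add_eq (hξ : IsCyclicVector π ξ) {p q : A →ₗ[ℂ] ℂ} (hp : IsPosFnC p)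
    (hq : IsPosFnC q) (hpq : p + q = matrixCoeff π ξ ξ) :
    ∃ T ∈ commutant π, 0 ≤ T ∧ p = matrixCoeff π (T ξ) ξ := by
  refine exists_commutant_of_fnLEC hξ hp (c := 1) ?_
  rw [← hpq, Complex.ofReal_one, one_smul]
  rwa [FnLEC, add_sub_cancel_left]

theorem IsLebDecompC.exists_commutant (hfin : finitePart π = ⊤) (hξ : IsCyclicVector π ξ)
    {B : H →L[ℂ] H} (hB : B ∈ commutant π) (hB0 : 0 ≤ B) {f fr fs : A →ₗ[ℂ] ℂ}
    (hsum : f + matrixCoeff π (B ξ) ξ = matrixCoeff π ξ ξ)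
    (h : IsLebDecompC f (matrixCoeff π (B ξ) ξ) fr fs) :
    ∃ C ∈ commutant π, ∃ S ∈ commutant π, fr = matrixCoeff π (C ξ) ξ ∧
      fs = matrixCoeff π (S ξ) ξ ∧ B.ker ≤ C.ker ∧ 0 ≤ S ∧ (S.ker ⊔ B.ker)ᗮ = ⊥ := by
  obtain ⟨hfr, hfs, rfl, habs, hsing⟩ := h
  have hg := (isPosFnC_matrixCoeff_iff hξ hB).2 hB0
  obtain ⟨C, hC, -, rfl⟩ := exists_commutant_of_add_eq hξ hfr (hfs.add hg)
    (by rw [← hsum, add_assoc])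
  obtain ⟨S, hS, hS0, rfl⟩ := exists_commutant_of_add_eq hξ hfs (hfr.add hg)
    (by rw [← hsum, add_left_comm, add_assoc])
  exact ⟨C, hC, S, hS, rfl, rfl, habs.ker_le hξ hB hC, hS0,
    hsing.orthogonal_ker_sup_ker_eq_bot hfin hξ hS hS0 hB hB0⟩

theorem IrredRepsFiniteDimensional.lebDecompUniqueC (hA : IrredRepsFiniteDimensional A) :
    LebDecompUniqueC A := by
  intro f g hf hg fr fs fr' fs' h h'
  obtain ⟨H, _, _, _, π, ξ, hξ, hfg⟩ := (hf.add hg).exists_isCyclicVector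
  obtain ⟨B, hB, hB0, rfl⟩ := exists_commutant_of_add_eq hξ hg hf (by rw [add_comm, hfg])
  have hfin := hA.finitePart_eq_top hξ
  obtain ⟨C, hC, S, hS, rfl, rfl, hBC, hS0, hSB⟩ := h.exists_commutant hfin hξ hB hB0 hfg
  obtain ⟨C', hC', S', hS', rfl, rfl, hBC', hS0', hSB'⟩ := h'.exists_commutant hfin hξ hB hB0 hfg
  have hsum : C + S = C' + S' := commutant_eq_of_matrixCoeff_eq hξ (add_mem hC hS)
    (add_mem hC' hS') (by
      rw [add_apply, add_apply, matrixCoeff_add_left, matrixCoeff_add_left, ← h.2.2.1, h'.2.2.1])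
  obtain rfl := eq_of_ker_le_ker_sub hS0.isSelfAdjoint hS0'.isSelfAdjoint hSB hSB' fun u hu => by
    have hD : (S - S') u = C' u - C u := by
      rw [sub_eq_sub_iff_add_eq_add.2 ((add_comm S C).trans hsum)]; rfl
    rw [LinearMap.mem_ker]
    exact hD.trans (by rw [show C' u = 0 from hBC' hu, show C u = 0 from hBC hu, sub_zero])
  rw [add_right_cancel hsum]
  exact ⟨rfl, rfl⟩

end Uniqueness

/-- **Theorem 2.14**: the Lebesgue decomposition of positive functionals over a C⋆-algebra
`A` is unique if and only if every irreducible representation of `A` is finite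
dimensional. -/
theorem cstar_lebesgue_unique_iff_irred_finiteDimensional
    (A : Type) [NonUnitalCStarAlgebra A] :
    LebDecompUniqueC A ↔
      ∀ (H : Type) [NormedAddCommGroup H] [InnerProductSpace ℂ H] [CompleteSpace H]
        (π : A →⋆ₙₐ[ℂ] (H →L[ℂ] H)), IsIrredRepC π → FiniteDimensional ℂ H := by
  refine ⟨fun hA H _ _ _ π hπ => ?_, fun hA => ?_⟩
  · exact finiteDimensional_of_lebDecompUniqueC hA hπ
  · exact IrredRepsFiniteDimensional.lebDecompUniqueC hA
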